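/- arXiv:2507.21316 — 3 statements merged into one kernel-verified Lean document; each statement's English description precedes it below -/
import Mathlib

section
/- Let G be a finite group and p a prime not dividing |G|. Then the group ring ℤ_(p)G is semiperfect if and only if both of the following hold: (i) for every complex irreducible character χ of G, the Schur index of χ (over ℚ) equals 1; and (ii) for every complex irreducible character χ of G, the prime p is inert in the field of character values ℚ(χ), i.e. p remains a prime element in the ring of integers of ℚ(χ) (equivalently, 𝒪_{ℚ(χ)}/(p) is a field). -/
/-- The Jacobson radical of a (possibly noncommutative) ring, as a two-sided ideal:
the intersection of all maximal left ideals. -/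
def ringJacobson (R : Type*) [Ring R] : TwoSidedIdeal R :=
  TwoSidedIdeal.jacobson ⊥

/-- A ring `R` is *semiperfect* if `R / J(R)` is a semisimple (artinian) ring and every
idempotent of `R / J(R)` can be lifted to an idempotent of `R`. -/
def IsSemiperfectRing (R : Type*) [Ring R] : Prop :=
  IsSemisimpleRing (ringJacobson R).ringCon.Quotient ∧
  ∀ x : (ringJacobson R).ringCon.Quotient, IsIdempotentElem x →
    ∃ e : R, IsIdempotentElem e ∧ (ringJacobson R).ringCon.mk' e = x

instance int_span_prime_isPrime (p : ℕ) [hp : Fact p.Prime] :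
    (Ideal.span {(p : ℤ)}).IsPrime :=
  (Ideal.span_singleton_prime (by exact_mod_cast hp.out.ne_zero)).mpr
    (Int.prime_iff_natAbs_prime.mpr (by simpa using hp.out))

/-- The localisation `ℤ_(p)` of the integers at the prime `p`. -/
abbrev ZLoc (p : ℕ) [Fact p.Prime] : Type :=
  Localization.AtPrime (Ideal.span {(p : ℤ)})

open scoped Classical in
/-- The field of character values `ℚ(χ) ⊆ ℂ` of a class function `χ : G → ℂ`. -/
noncomputable def charField {G : Type} [Group G] (χ : G → ℂ) : IntermediateField ℚ ℂ :=
  IntermediateField.adjoin ℚ (Set.range χ)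

set_option synthInstance.maxHeartbeats 1000000 in
/-- The Schur index (over `ℚ`) of a complex character `χ` of a finite group `G`: the least
`m ≥ 1` such that `m • χ` is afforded by a representation of `G` over the field of character
values `ℚ(χ)`. -/
noncomputable def schurIndex {G : Type} [Group G] (χ : G → ℂ) : ℕ :=
  sInf {m : ℕ | 0 < m ∧
    ∃ (n : ℕ) (ρ : Representation (charField χ) G (Fin n → charField χ)),
      ∀ g : G, algebraMap (charField χ) ℂ
          (LinearMap.trace (charField χ) (Fin n → charField χ) (ρ g)) = (m : ℂ) * χ g}

/-!
Let `O` be a discrete valuation ring with uniformizer `ϖ`, finite residue field and fraction field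
`k` of characteristic zero, and suppose that `|G|` is a unit of `O`. Reduction modulo `ϖ` is a
local homomorphism from `O[G]` onto a semisimple ring, so `O[G]` is semiperfect if and only if
primitive idempotents `e` of `O[G]` remain primitive modulo `ϖ`.

If `e` remains primitive, the reduced corner is a finite field, hence generated by one element, and
by Nakayama so is `e O[G] e`. On an irreducible representation over an algebraically closed field
this corner therefore has a common eigenvector `v`. The scalars by which elements of `k[G]` act on
`v` form a field `F`, and the `k[G]`-submodule generated by `v` is a form of the representation
over `F`. By the density theorem `k[G]` acts on it through all `F`-endomorphisms, so `F` is the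
field of character values and the Schur index is one. The integral elements of `F` are the
eigenvalues of `e O[G] e`, and `ϖ` divides an eigenvalue exactly when the corner element vanishes
modulo `ϖ`; since the reduced corner is a domain, `ϖ` is prime in `F`.

Conversely, if the character is afforded over the field of its values, `k[G]` maps onto the
endomorphism ring of that representation, because class sums supply all the scalars. A primitive
`e` then acts as a projection onto a line, on which `e O[G] e` acts through integral scalars. The
eigenvalue `t` of a lift of an idempotent of the reduced corner satisfies `ϖ ∣ t * (t - 1)`, so
primality of `ϖ` makes that idempotent trivial.
-/

open Subsemigroup (corner mem_corner_iff)
open scoped MonoidAlgebra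

section Corner

variable {R F : Type*} [Ring R] [Ring F]

theorem exists_mem_corner_map_eq {π : R →+* F} (hπ : Function.Surjective π) {e : R} {b : F}
    (hb : b ∈ corner (π e)) : ∃ x ∈ corner e, π x = b := by
  obtain ⟨c, rfl⟩ := hb
  obtain ⟨r, rfl⟩ := hπ c
  exact ⟨e * r * e, ⟨r, rfl⟩, by rw [map_mul, map_mul]⟩

theorem map_mem_corner (π : R →+* F) {e x : R} (hx : x ∈ corner e) : π x ∈ corner (π e) := by
  obtain ⟨r, rfl⟩ := hx
  exact ⟨π r, by rw [map_mul, map_mul]⟩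

theorem sub_mem_corner {e x y : R} (hx : x ∈ corner e) (hy : y ∈ corner e) : x - y ∈ corner e :=
  (NonUnitalRing.corner e).sub_mem hx hy

theorem self_mem_corner {e : R} (he : IsIdempotentElem e) : e ∈ corner e :=
  (mem_corner_iff he).2 ⟨he, he⟩

theorem corner_le_corner_of_mem {e f : R} (he : IsIdempotentElem e) (hf : f ∈ corner e) :
    corner f ≤ corner e := by
  obtain ⟨hef, hfe⟩ := (mem_corner_iff he).1 hf
  rintro _ ⟨r, rfl⟩
  refine (mem_corner_iff he).2 ⟨?_, ?_⟩
  · simp only [← mul_assoc, hef]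
  · simp only [mul_assoc, hfe]

theorem eq_zero_of_isIdempotentElem_of_isNilpotent {e : R} (he : IsIdempotentElem e)
    (hnil : IsNilpotent e) : e = 0 := by
  obtain ⟨n, hn⟩ := hnil
  rw [← he.pow_succ_eq n, pow_succ, hn, zero_mul]

end Corner

section PrimitiveIdempotent

variable {R : Type*} [Ring R]

/-- A primitive idempotent: a nonzero idempotent `e` such that the corner ring `e R e` has no
idempotents besides `0` and `e`. -/
structure IsPrimitiveIdempotent (e : R) : Prop where
  isIdempotentElem : IsIdempotentElem e
  ne_zero : e ≠ 0
  eq_zero_or_eq : ∀ f ∈ corner e, IsIdempotentElem f → f = 0 ∨ f = e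

theorem IsPrimitiveIdempotent.mul_self {e : R} (he : IsPrimitiveIdempotent e) : e * e = e :=
  he.isIdempotentElem.eq

theorem IsPrimitiveIdempotent.mem_corner_iff {e r : R} (he : IsPrimitiveIdempotent e) :
    r ∈ corner e ↔ e * r = r ∧ r * e = r :=
  Subsemigroup.mem_corner_iff he.isIdempotentElem

theorem isIdempotentElem_sub_of_mem_corner {e f : R} (he : IsIdempotentElem e)
    (hf : f ∈ corner e) (hff : IsIdempotentElem f) : IsIdempotentElem (e - f) := by
  obtain ⟨hef, hfe⟩ := (mem_corner_iff he).1 hf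
  rw [IsIdempotentElem, sub_mul, mul_sub, mul_sub, he.eq, hef, hfe, hff.eq, sub_self, sub_zero]

theorem span_one_sub_lt_of_mem_corner {e f : R} (he : IsIdempotentElem e) (hf : f ∈ corner e)
    (hne : f ≠ e) : Ideal.span {1 - e} < Ideal.span {1 - f} := by
  obtain ⟨hef, hfe⟩ := (mem_corner_iff he).1 hf
  refine lt_of_le_not_ge ?_ fun hle => hne ?_
  · refine (Ideal.span_singleton_le_iff_mem _).2 (Ideal.mem_span_singleton'.2 ⟨1 - e, ?_⟩)
    rw [mul_sub, mul_one, sub_mul, one_mul, hef, sub_self, sub_zero]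
  · obtain ⟨a, ha⟩ := Ideal.mem_span_singleton'.1 ((Ideal.span_singleton_le_iff_mem _).1 hle)
    have h_zero : (1 - f) * e = 0 := by rw [← ha, mul_assoc, sub_mul, he.eq, one_mul, sub_self,
      mul_zero]
    rw [sub_mul, one_mul, hfe, sub_eq_zero] at h_zero
    exact h_zero.symm

theorem exists_isPrimitiveIdempotent_notMem [IsNoetherianRing R] (S : AddSubgroup R) {e₀ : R}
    (he₀ : IsIdempotentElem e₀) (hS : e₀ ∉ S) :
    ∃ e ∈ corner e₀, IsPrimitiveIdempotent e ∧ e ∉ S := by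
  induction hI : (Ideal.span {1 - e₀} : Ideal R) using WellFoundedGT.induction
    generalizing e₀ with | _ I ih
  by_cases hprim : IsPrimitiveIdempotent e₀
  · exact ⟨e₀, self_mem_corner he₀, hprim, hS⟩
  obtain ⟨f, hf, hff, hf_ne_zero, hf_ne⟩ :
      ∃ f ∈ corner e₀, IsIdempotentElem f ∧ f ≠ 0 ∧ f ≠ e₀ := by
    by_contra! hcon
    exact hprim ⟨he₀, fun h => hS (h ▸ S.zero_mem),
      fun f hf hff => or_iff_not_imp_left.2 (hcon f hf hff)⟩
  have descend : ∀ f ∈ corner e₀, IsIdempotentElem f → f ≠ e₀ → f ∉ S →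
      ∃ e ∈ corner e₀, IsPrimitiveIdempotent e ∧ e ∉ S := fun f hf hff hne hfS => by
    obtain ⟨e, he, hep, heS⟩ :=
      ih _ (hI ▸ span_one_sub_lt_of_mem_corner he₀ hf hne) hff hfS rfl
    exact ⟨e, corner_le_corner_of_mem he₀ hf he, hep, heS⟩
  by_cases hfS : f ∈ S
  · exact descend (e₀ - f) (sub_mem_corner (self_mem_corner he₀) hf)
      (isIdempotentElem_sub_of_mem_corner he₀ hf hff) (by simpa using hf_ne_zero)
      fun h => hS (by simpa using S.add_mem h hfS)
  · exact descend f hf hff hf_ne hfS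

end PrimitiveIdempotent

section Semisimple

variable {F : Type*} [Ring F] [IsSemisimpleRing F]

theorem exists_eq_mul_mul_self (x : F) : ∃ y, x = x * y * x := by
  obtain ⟨N, hN⟩ := exists_isCompl (Ideal.span {x} : Ideal F)
  have hone : (1 : F) ∈ Ideal.span {x} ⊔ N := hN.sup_eq_top ▸ Submodule.mem_top
  obtain ⟨a, ha, b, hb, hab⟩ := Submodule.mem_sup.1 hone
  obtain ⟨y, rfl⟩ := Ideal.mem_span_singleton'.1 ha
  have hxb : x * b = x - x * y * x := by
    rw [eq_sub_iff_add_eq', mul_assoc, ← mul_add, hab, mul_one]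
  have hx : x ∈ Ideal.span {x} := Ideal.mem_span_singleton_self x
  have hxb_zero : x * b = 0 := Submodule.disjoint_def.1 hN.disjoint _
    (hxb ▸ sub_mem hx (Ideal.mul_mem_left _ _ hx)) (Ideal.mul_mem_left _ _ hb)
  exact ⟨y, sub_eq_zero.1 (hxb ▸ hxb_zero)⟩

theorem IsPrimitiveIdempotent.exists_mul_eq {e y : F} (he : IsPrimitiveIdempotent e)
    (hye : y * e = y) (hy : y ≠ 0) : ∃ t, e * t * y = e := by
  obtain ⟨t, ht⟩ := exists_eq_mul_mul_self y
  refine ⟨t, (he.eq_zero_or_eq (e * t * y) ?_ ?_).resolve_left fun h => hy ?_⟩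
  · exact he.mem_corner_iff.2 ⟨by rw [← mul_assoc, ← mul_assoc, he.mul_self],
      by rw [mul_assoc, hye]⟩
  · calc e * t * y * (e * t * y) = e * t * (y * e * t * y) := by noncomm_ring
      _ = e * t * y := by rw [hye, ← ht]
  · calc y = y * e * t * y := by rw [hye]; exact ht
      _ = y * (e * t * y) := by noncomm_ring
      _ = 0 := by rw [h, mul_zero]

theorem IsPrimitiveIdempotent.isAtom_span {e : F} (he : IsPrimitiveIdempotent e) :
    IsAtom (Ideal.span {e}) := by
  refine ⟨by simpa using he.ne_zero, fun N hN => ?_⟩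
  by_contra hbot
  obtain ⟨y, hyN, hy⟩ := Submodule.exists_mem_ne_zero_of_ne_bot hbot
  obtain ⟨z, rfl⟩ := Ideal.mem_span_singleton'.1 (hN.le hyN)
  obtain ⟨t, ht⟩ := he.exists_mul_eq (y := z * e) (by rw [mul_assoc, he.mul_self]) hy
  exact hN.not_ge ((Ideal.span_singleton_le_iff_mem _).2 (ht ▸ Ideal.mul_mem_left _ _ hyN))

theorem IsPrimitiveIdempotent.eq_zero_or_eq_zero_of_mul_eq_zero {e x y : F}
    (he : IsPrimitiveIdempotent e) (hx : x ∈ corner e) (hy : y ∈ corner e) (hxy : x * y = 0) :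
    x = 0 ∨ y = 0 := by
  refine or_iff_not_imp_left.2 fun hx_ne => ?_
  obtain ⟨t, ht⟩ := he.exists_mul_eq (he.mem_corner_iff.1 hx).2 hx_ne
  rw [← (he.mem_corner_iff.1 hy).1, ← ht, mul_assoc, hxy, mul_zero]

theorem IsPrimitiveIdempotent.isDomain_corner {e : F} (he : IsPrimitiveIdempotent e) :
    IsDomain he.isIdempotentElem.Corner := by
  have : Nontrivial he.isIdempotentElem.Corner :=
    ⟨⟨1, 0, fun h => he.ne_zero (congrArg Subtype.val h)⟩⟩
  have : NoZeroDivisors he.isIdempotentElem.Corner := ⟨fun {a b} hab =>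
    (he.eq_zero_or_eq_zero_of_mul_eq_zero a.2 b.2 (congrArg Subtype.val hab)).imp
      Subtype.ext Subtype.ext⟩
  exact NoZeroDivisors.to_isDomain _

theorem coe_corner_pow {R : Type*} [Ring R] {e : R} (he : IsIdempotentElem e) (x : he.Corner)
    (n : ℕ) : (x ^ n).1 = e * x.1 ^ n := by
  induction n with
  | zero => rw [pow_zero, pow_zero, mul_one]; rfl
  | succ n ih => rw [pow_succ, pow_succ, ← mul_assoc, ← ih]; rfl

theorem IsPrimitiveIdempotent.eq_zero_of_isNilpotent {e x : F} (he : IsPrimitiveIdempotent e)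
    (hx : x ∈ corner e) (hnil : IsNilpotent x) : x = 0 := by
  have := he.isDomain_corner
  obtain ⟨n, hn⟩ := hnil
  let X : he.isIdempotentElem.Corner := ⟨x, hx⟩
  have hX : X ^ n = 0 := Subtype.ext (by rw [coe_corner_pow, hn, mul_zero]; rfl)
  have hX_zero : X = 0 := eq_zero_of_pow_eq_zero hX
  exact congrArg Subtype.val hX_zero

/-- By Wedderburn's little theorem the corner is a finite field, so its unit group is cyclic. -/
theorem IsPrimitiveIdempotent.exists_forall_mem_corner_eq_mul_pow [Finite F] {e : F}
    (he : IsPrimitiveIdempotent e) :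
    ∃ g ∈ corner e, ∀ x ∈ corner e, x ≠ 0 → ∃ n : ℕ, x = e * g ^ n := by
  have := he.isDomain_corner
  have : Finite he.isIdempotentElem.Corner :=
    Finite.of_injective (fun x => x.1) Subtype.val_injective
  let _ : Field he.isIdempotentElem.Corner := (Finite.isDomain_to_isField _).toField
  obtain ⟨g, hg⟩ := IsCyclic.exists_monoid_generator (α := he.isIdempotentElem.Cornerˣ)
  refine ⟨g.1.1, g.1.2, fun x hx hx_ne => ?_⟩
  let X : he.isIdempotentElem.Corner := ⟨x, hx⟩
  have hX : X ≠ 0 := fun h => hx_ne (congrArg Subtype.val h)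
  obtain ⟨n, hn⟩ := (Submonoid.mem_powers_iff _ _).1 (hg (Units.mk0 X hX))
  refine ⟨n, ?_⟩
  rw [← coe_corner_pow, ← Units.val_pow_eq_pow_val, hn, Units.val_mk0]

end Semisimple

section Lifting

variable {R F : Type*} [Ring R] [Ring F] {π : R →+* F}

theorem exists_isIdempotentElem_map_eq_of_mul_eq (hπ : Function.Surjective π) {e : R} {x : F}
    (he : IsIdempotentElem e) (hxe : x * π e = x) (hex : π e * x = π e) :
    ∃ f : R, IsIdempotentElem f ∧ π f = x := by
  obtain ⟨z, rfl⟩ := hπ x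
  refine ⟨e + (1 - e) * z * e, ?_, ?_⟩
  · calc (e + (1 - e) * z * e) * (e + (1 - e) * z * e)
        = e * e + e * (1 - e) * z * e + (1 - e) * z * (e * e)
          + (1 - e) * z * (e * (1 - e)) * z * e := by noncomm_ring
      _ = e + (1 - e) * z * e := by rw [he.mul_one_sub_self, he.eq]; simp
  · simp only [map_add, map_mul, map_sub, sub_mul, one_mul]
    rw [mul_assoc, hxe, hex]
    simp

theorem exists_mul_eq_of_isCompl_span {a b : F} (ha : IsIdempotentElem a)
    (hb : IsIdempotentElem b) (hab : IsCompl (Ideal.span {a}) (Ideal.span {b})) :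
    ∃ f, f * a = f ∧ a * f = a ∧ (1 - f) * b = 1 - f ∧ b * (1 - f) = b := by
  have hone : (1 : F) ∈ Ideal.span {a} ⊔ Ideal.span {b} := hab.sup_eq_top ▸ Submodule.mem_top
  obtain ⟨f, hf, f', hf', hff'⟩ := Submodule.mem_sup.1 hone
  obtain rfl : f' = 1 - f := eq_sub_of_add_eq' hff'
  have mul_eq_self {c x : F} (hc : IsIdempotentElem c) (hx : x ∈ Ideal.span {c}) :
      x * c = x := by
    obtain ⟨y, rfl⟩ := Ideal.mem_span_singleton'.1 hx
    rw [mul_assoc, hc.eq]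
  have eq_zero {x : F} (hxa : x ∈ Ideal.span {a}) (hxb : x ∈ Ideal.span {b}) : x = 0 :=
    Submodule.disjoint_def.1 hab.disjoint x hxa hxb
  have ha_mem : a ∈ Ideal.span {a} := Ideal.mem_span_singleton_self a
  have hb_mem : b ∈ Ideal.span {b} := Ideal.mem_span_singleton_self b
  refine ⟨f, mul_eq_self ha hf, ?_, mul_eq_self hb hf', ?_⟩
  · have h := eq_zero (x := a * (1 - f))
      (by rw [mul_sub, mul_one]; exact sub_mem ha_mem (Ideal.mul_mem_left _ _ hf))
      (Ideal.mul_mem_left _ _ hf')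
    rw [mul_sub, mul_one, sub_eq_zero] at h
    exact h.symm
  · have h := eq_zero (x := b * f) (Ideal.mul_mem_left _ _ hf)
      (by rw [show b * f = b - b * (1 - f) by noncomm_ring]
          exact sub_mem hb_mem (Ideal.mul_mem_left _ _ hf'))
    rw [mul_sub, mul_one, h, sub_zero]

theorem span_singleton_add_of_isIdempotentElem {a b : F} (ha : IsIdempotentElem a)
    (hb : IsIdempotentElem b) (hab : a * b = 0) (hba : b * a = 0) :
    Ideal.span {a + b} = Ideal.span {a} ⊔ Ideal.span {b} := by
  refine le_antisymm ?_ (sup_le ?_ ?_) <;> rw [Ideal.span_singleton_le_iff_mem]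
  · exact Submodule.add_mem_sup (Ideal.mem_span_singleton_self a) (Ideal.mem_span_singleton_self b)
  · exact Ideal.mem_span_singleton'.2 ⟨a, by rw [mul_add, ha.eq, hab, add_zero]⟩
  · exact Ideal.mem_span_singleton'.2 ⟨b, by rw [mul_add, hb.eq, hba, zero_add]⟩

/-- Among the idempotents whose image spans an ideal disjoint from `N`, one with maximal span is
a complement: otherwise a primitive idempotent orthogonal to it could be added. -/
theorem exists_isIdempotentElem_isCompl_span [IsNoetherianRing R] [IsSemisimpleRing F]
    (hprim : ∀ e, IsPrimitiveIdempotent e → IsPrimitiveIdempotent (π e)) (N : Ideal F) :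
    ∃ e : R, IsIdempotentElem e ∧ IsCompl (Ideal.span {π e}) N := by
  obtain ⟨e, ⟨he, hdisj⟩, hmax⟩ := exists_maximalFor_of_wellFoundedGT
    (fun e => IsIdempotentElem e ∧ Disjoint (Ideal.span {π e}) N) (fun e => Ideal.span {π e})
    ⟨0, IsIdempotentElem.zero, by simp⟩
  refine ⟨e, he, hdisj, codisjoint_iff.2 ?_⟩
  by_contra hne
  let S : Ideal F := Ideal.span {π e} ⊔ N
  have heS : π e ∈ S := Submodule.mem_sup_left (Ideal.mem_span_singleton_self _)
  have hone_sub : 1 - e ∉ S.toAddSubgroup.comap π.toAddMonoidHom := fun h =>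
    hne ((Ideal.eq_top_iff_one S).2 (by simpa using S.add_mem heS h))
  obtain ⟨f, hf, hfp, hfS⟩ := exists_isPrimitiveIdempotent_notMem _ he.one_sub hone_sub
  obtain ⟨hef, hfe⟩ : e * f = 0 ∧ f * e = 0 := by
    simpa [mem_corner_iff he.one_sub, sub_mul, mul_sub] using hf
  have hspan : Ideal.span {π (e + f)} = Ideal.span {π e} ⊔ Ideal.span {π f} := by
    rw [map_add, span_singleton_add_of_isIdempotentElem (he.map π)
      (hfp.isIdempotentElem.map π) (by rw [← map_mul, hef, map_zero])
      (by rw [← map_mul, hfe, map_zero])]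
  have hfS_disj : Disjoint (Ideal.span {π f}) S :=
    (hprim f hfp).isAtom_span.not_le_iff_disjoint.1 fun hle =>
      hfS ((Ideal.span_singleton_le_iff_mem _).1 hle)
  have hdisj' : Disjoint (Ideal.span {π (e + f)}) N := by
    rw [hspan, sup_comm]
    exact hdisj.disjoint_sup_left_of_disjoint_sup_right hfS_disj
  have hadd : IsIdempotentElem (e + f) := by
    rw [IsIdempotentElem, add_mul, mul_add, mul_add, he.eq, hef, hfe, hfp.mul_self, add_zero,
      zero_add]
  have hle : Ideal.span {π (e + f)} ≤ Ideal.span {π e} :=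
    hmax ⟨hadd, hdisj'⟩ (le_sup_left.trans_eq hspan.symm)
  have hf_mem : π f ∈ Ideal.span {π (e + f)} :=
    hspan ▸ Submodule.mem_sup_right (Ideal.mem_span_singleton_self _)
  exact hfS (Submodule.mem_sup_left (hle hf_mem))

theorem exists_isIdempotentElem_map_eq_of_forall_isPrimitiveIdempotent_map [IsNoetherianRing R]
    [IsSemisimpleRing F] (hπ : Function.Surjective π)
    (hprim : ∀ e, IsPrimitiveIdempotent e → IsPrimitiveIdempotent (π e)) {x : F}
    (hx : IsIdempotentElem x) : ∃ f : R, IsIdempotentElem f ∧ π f = x := by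
  obtain ⟨e, he, hcompl⟩ := exists_isIdempotentElem_isCompl_span hprim (Ideal.span {x})
  obtain ⟨f, hfe, hef, hfx, hxf⟩ := exists_mul_eq_of_isCompl_span (he.map π) hx hcompl
  obtain ⟨f, hf, rfl⟩ := exists_isIdempotentElem_map_eq_of_mul_eq hπ he hfe hef
  rw [← map_one π, ← map_sub] at hfx hxf
  exact exists_isIdempotentElem_map_eq_of_mul_eq hπ hf.one_sub hxf hfx

theorem eq_zero_of_isIdempotentElem_of_map_eq_zero [IsLocalHom π] {e : R}
    (he : IsIdempotentElem e) (hπe : π e = 0) : e = 0 := by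
  have hunit : IsUnit (1 - e) := isUnit_of_map_unit π _ (by simp [hπe])
  exact hunit.mul_right_eq_zero.1 he.one_sub_mul_self

/-- Since `π (f * e * f) = π f`, the element `u = 1 - f + f * e * f` is a unit, and the witness is
`e * (f * u⁻¹) * e`. -/
theorem exists_mem_corner_isIdempotentElem_map_eq [IsLocalHom π] {e f : R}
    (he : IsIdempotentElem e) (hf : IsIdempotentElem f) (hef : π f ∈ corner (π e)) :
    ∃ g ∈ corner e, IsIdempotentElem g ∧ π g = π f := by
  obtain ⟨hef, hfe⟩ := (mem_corner_iff (he.map π)).1 hef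
  have hπu : π (1 - f + f * e * f) = 1 := by
    rw [map_add, map_sub, map_one, map_mul, map_mul, hfe, ← map_mul, hf.eq, sub_add_cancel]
  obtain ⟨u, hu⟩ : IsUnit (1 - f + f * e * f) := isUnit_of_map_unit π _ (hπu ▸ isUnit_one)
  have hfu : f * u = f * e * f := by
    rw [hu, mul_add, mul_sub, hf.eq, mul_one, sub_self, zero_add, ← mul_assoc, ← mul_assoc, hf.eq]
  have huf : u * f = f * e * f := by
    rw [hu, add_mul, sub_mul, hf.eq, one_mul, sub_self, zero_add, mul_assoc, hf.eq]
  set w := f * (u⁻¹ : Rˣ) with hw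
  have hwu : w = (u⁻¹ : Rˣ) * f := by
    rw [hw, Units.eq_inv_mul_iff_mul_eq, ← mul_assoc, huf, ← hfu, mul_assoc, Units.mul_inv,
      mul_one]
  have hfw : f * w = w := by rw [hw, ← mul_assoc, hf.eq]
  have hwf : w * f = w := by rw [hwu, mul_assoc, hf.eq]
  have hwew : w * e * w = w := by
    calc w * e * w = w * f * e * (f * w) := by rw [hwf, hfw]
      _ = w * (f * e * f) * w := by noncomm_ring
      _ = f * (u⁻¹ * u : R) * f * w := by rw [← huf, hw]; noncomm_ring
      _ = w := by rw [Units.inv_mul, mul_one, hf.eq, hfw]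
  have hπw : π w = π f := by
    calc π w = π (w * u) := by rw [map_mul π w u, hu, hπu, mul_one]
      _ = π f := by rw [hw, mul_assoc, Units.inv_mul, mul_one]
  refine ⟨e * w * e, ⟨w, rfl⟩, ?_, by rw [map_mul, map_mul, hπw, hef, hfe]⟩
  calc e * w * e * (e * w * e) = e * w * (e * e) * w * e := by noncomm_ring
    _ = e * (w * e * w) * e := by rw [he.eq]; noncomm_ring
    _ = e * w * e := by rw [hwew]

theorem IsPrimitiveIdempotent.map [IsLocalHom π]
    (hlift : ∀ x : F, IsIdempotentElem x → ∃ f : R, IsIdempotentElem f ∧ π f = x)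
    {e : R} (he : IsPrimitiveIdempotent e) : IsPrimitiveIdempotent (π e) where
  isIdempotentElem := he.isIdempotentElem.map π
  ne_zero h := he.ne_zero (eq_zero_of_isIdempotentElem_of_map_eq_zero he.isIdempotentElem h)
  eq_zero_or_eq b hb hbb := by
    obtain ⟨f, hf, rfl⟩ := hlift b hbb
    obtain ⟨g, hg, hgg, hgf⟩ := exists_mem_corner_isIdempotentElem_map_eq he.isIdempotentElem hf hb
    rw [← hgf]
    exact (he.eq_zero_or_eq g hg hgg).imp (fun h => by rw [h, map_zero]) (fun h => by rw [h])

variable [IsLocalHom π] [IsSemisimpleRing F]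

theorem mem_ringJacobson_iff_map_eq_zero (hπ : Function.Surjective π) {x : R} :
    x ∈ ringJacobson R ↔ π x = 0 := by
  rw [ringJacobson]
  refine ⟨fun hx => ?_, fun hx => TwoSidedIdeal.mem_jacobson_iff.2 fun y => ?_⟩
  · obtain ⟨y', hy⟩ := exists_eq_mul_mul_self (π x)
    obtain ⟨y, rfl⟩ := hπ y'
    obtain ⟨z, hz⟩ := TwoSidedIdeal.mem_jacobson_iff.1 (TwoSidedIdeal.mul_mem_right _ _ (-y) hx) 1
    rw [TwoSidedIdeal.mem_bot, sub_eq_zero] at hz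
    have hz' : z * (1 - x * y) = 1 := Eq.trans (by noncomm_ring) hz
    calc π x = π (z * (1 - x * y) * x) := by rw [hz', one_mul]
      _ = π z * (π x - π x * π y * π x) := by
        simp only [map_mul, map_sub, mul_assoc, sub_mul, one_mul]
      _ = 0 := by rw [← hy, sub_self, mul_zero]
  · obtain ⟨u, hu⟩ : IsUnit (y * x + 1) := isUnit_of_map_unit π _ (by simp [hx])
    refine ⟨(u⁻¹ : Rˣ), ?_⟩
    rw [TwoSidedIdeal.mem_bot, sub_eq_zero, ← u.inv_mul, hu]
    noncomm_ring

theorem ringJacobson_mk_eq_mk_iff (hπ : Function.Surjective π) {x y : R} :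
    (ringJacobson R).ringCon.mk' x = (ringJacobson R).ringCon.mk' y ↔ π x = π y := by
  rw [← sub_eq_zero (a := π x), ← map_sub, ← mem_ringJacobson_iff_map_eq_zero hπ,
    ← TwoSidedIdeal.rel_iff]
  exact RingCon.eq _

theorem isSemisimpleRing_quotient_ringJacobson (hπ : Function.Surjective π) :
    IsSemisimpleRing (ringJacobson R).ringCon.Quotient := by
  obtain ⟨s, hs⟩ := hπ.hasRightInverse
  let θ : F →+* (ringJacobson R).ringCon.Quotient :=
    π.liftOfRightInverse s hs ⟨(ringJacobson R).ringCon.mk', fun x hx => by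
      simpa using (ringJacobson_mk_eq_mk_iff hπ (y := 0)).2 (by simpa using hx)⟩
  refine θ.isSemisimpleRing_of_surjective fun y => ?_
  obtain ⟨x, rfl⟩ := RingCon.mk'_surjective _ y
  exact ⟨π x, RingHom.liftOfRightInverse_comp_apply _ _ _ _ _⟩

theorem isSemiperfectRing_iff_forall_exists_isIdempotentElem_map_eq
    (hπ : Function.Surjective π) :
    IsSemiperfectRing R ↔
      ∀ x : F, IsIdempotentElem x → ∃ f : R, IsIdempotentElem f ∧ π f = x := by
  refine ⟨fun ⟨_, h⟩ x hx => ?_, fun h => ⟨isSemisimpleRing_quotient_ringJacobson hπ, ?_⟩⟩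
  · obtain ⟨y, rfl⟩ := hπ x
    obtain ⟨e, he, hey⟩ := h ((ringJacobson R).ringCon.mk' y) (by
      rw [IsIdempotentElem, ← map_mul, ringJacobson_mk_eq_mk_iff hπ, map_mul, hx.eq])
    exact ⟨e, he, (ringJacobson_mk_eq_mk_iff hπ).1 hey⟩
  · intro x hx
    obtain ⟨y, rfl⟩ := RingCon.mk'_surjective _ x
    obtain ⟨f, hf, hfy⟩ := h (π y) (by
      rw [IsIdempotentElem, ← map_mul, ← ringJacobson_mk_eq_mk_iff hπ, map_mul, hx.eq])
    exact ⟨f, hf, (ringJacobson_mk_eq_mk_iff hπ).2 hfy⟩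

theorem isSemiperfectRing_iff_forall_isPrimitiveIdempotent_map [IsNoetherianRing R]
    (hπ : Function.Surjective π) :
    IsSemiperfectRing R ↔ ∀ e : R, IsPrimitiveIdempotent e → IsPrimitiveIdempotent (π e) := by
  rw [isSemiperfectRing_iff_forall_exists_isIdempotentElem_map_eq hπ]
  exact ⟨fun hlift _ he => he.map hlift, fun hprim _ hx =>
    exists_isIdempotentElem_map_eq_of_forall_isPrimitiveIdempotent_map hπ hprim hx⟩

end Lifting

section Reduction

variable (O G : Type*) [CommRing O] [IsLocalRing O] [Group G]

/-- Reduction of the group ring modulo the maximal ideal of the local ring of coefficients. -/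
noncomputable def reduction : O[G] →+* (IsLocalRing.ResidueField O)[G] :=
  MonoidAlgebra.mapRingHom G (IsLocalRing.residue O)

variable {O G}

theorem reduction_surjective : Function.Surjective (reduction O G) := by
  intro x
  induction x using MonoidAlgebra.induction with
  | zero => exact ⟨0, map_zero _⟩
  | single_add g c x _ _ ih =>
    obtain ⟨y, hy⟩ := ih
    obtain ⟨c, rfl⟩ := IsLocalRing.residue_surjective c
    exact ⟨MonoidAlgebra.single g c + y, by
      rw [map_add, hy, reduction, MonoidAlgebra.mapRingHom_single]⟩

theorem reduction_smul (c : O) (x : O[G]) :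
    reduction O G (c • x) = IsLocalRing.residue O c • reduction O G x := by
  ext g
  simp [reduction]

theorem reduction_aeval (x : O[G]) (P : Polynomial O) :
    reduction O G (Polynomial.aeval x P) =
      Polynomial.aeval (reduction O G x) (P.map (IsLocalRing.residue O)) := by
  induction P using Polynomial.induction_on' with
  | add p q hp hq => simp only [map_add, Polynomial.map_add, hp, hq]
  | monomial n a =>
    simp only [Polynomial.map_monomial, Polynomial.aeval_monomial, ← Algebra.smul_def,
      reduction_smul, map_pow]

theorem reduction_eq_zero_iff {x : O[G]} :
    reduction O G x = 0 ↔ x ∈ IsLocalRing.maximalIdeal O • (⊤ : Submodule O O[G]) := by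
  refine ⟨fun hx => ?_, fun hx => ?_⟩
  · have hcoeff (g : G) : x.coeff g ∈ IsLocalRing.maximalIdeal O := by
      rw [← IsLocalRing.residue_eq_zero_iff]
      simpa [reduction] using congrArg (fun y => y.coeff g) hx
    rw [← MonoidAlgebra.sum_coeff_single x]
    refine Submodule.sum_mem _ fun g _ => ?_
    rw [show MonoidAlgebra.single g (x.coeff g) = x.coeff g • MonoidAlgebra.single g (1 : O) by
      simp]
    exact Submodule.smul_mem_smul (hcoeff g) Submodule.mem_top
  · induction hx using Submodule.smul_induction_on' with
    | smul c hc y _ =>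
      rw [reduction_smul, (IsLocalRing.residue_eq_zero_iff c).2 hc, zero_smul]
    | add x _ y _ hx hy => rw [map_add, hx, hy, add_zero]

theorem reduction_eq_zero_iff_exists_smul {O : Type*} [CommRing O] [IsDomain O]
    [IsDiscreteValuationRing O] {ϖ : O} (hϖ : Irreducible ϖ) {x : O[G]} :
    reduction O G x = 0 ↔ ∃ y, x = ϖ • y := by
  rw [reduction_eq_zero_iff, hϖ.maximalIdeal_eq, Submodule.ideal_span_singleton_smul,
    Submodule.mem_smul_pointwise_iff_exists]
  simp [eq_comm]

theorem exists_mem_corner_eq_smul_of_reduction_eq_zero {O : Type*} [CommRing O] [IsDomain O]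
    [IsDiscreteValuationRing O] {ϖ : O} (hϖ : Irreducible ϖ) {e x : O[G]}
    (he : IsIdempotentElem e) (hx : x ∈ corner e) (hx_red : reduction O G x = 0) :
    ∃ y ∈ corner e, x = ϖ • y := by
  obtain ⟨y, rfl⟩ := (reduction_eq_zero_iff_exists_smul hϖ).1 hx_red
  obtain ⟨hex, hxe⟩ := (mem_corner_iff he).1 hx
  exact ⟨e * y * e, ⟨y, rfl⟩, by rw [← smul_mul_assoc, ← mul_smul_comm, hex, hxe]⟩

variable [Finite G]

theorem exists_mul_eq_one_of_reduction_eq_one {u : O[G]} (hu : reduction O G u = 1) :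
    ∃ z, z * u = 1 := by
  have hle : (⊤ : Submodule O O[G]) ≤ LinearMap.range (LinearMap.mulRight O u) := by
    refine Submodule.le_of_le_smul_of_le_jacobson_bot (I := IsLocalRing.maximalIdeal O)
      Module.Finite.fg_top (IsLocalRing.maximalIdeal_le_jacobson _) fun z _ => ?_
    have hz : reduction O G (z - z * u) = 0 := by rw [map_sub, map_mul, hu, mul_one, sub_self]
    rw [← add_sub_cancel (z * u) z]
    exact Submodule.add_mem_sup ⟨z, rfl⟩ (reduction_eq_zero_iff.1 hz)
  exact hle (x := 1) Submodule.mem_top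

instance isLocalHom_reduction : IsLocalHom (reduction O G) where
  map_nonunit u hu := by
    have isUnit_of_map_eq_one {w : O[G]} (hw : reduction O G w = 1) : IsUnit w := by
      obtain ⟨z, hz⟩ := exists_mul_eq_one_of_reduction_eq_one hw
      have hz_red : reduction O G z = 1 := by
        simpa only [map_mul, hw, mul_one, map_one] using congrArg (reduction O G) hz
      obtain ⟨w', hw'⟩ := exists_mul_eq_one_of_reduction_eq_one hz_red
      exact ⟨⟨w, z, left_inv_eq_right_inv hw' hz ▸ hw', hz⟩, rfl⟩
    obtain ⟨v', huv, hvu⟩ := isUnit_iff_exists.1 hu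
    obtain ⟨v, rfl⟩ := reduction_surjective v'
    rw [← map_mul] at huv hvu
    obtain ⟨z, hz, -⟩ := isUnit_iff_exists.1 (isUnit_of_map_eq_one huv)
    obtain ⟨z', -, hz'⟩ := isUnit_iff_exists.1 (isUnit_of_map_eq_one hvu)
    exact isUnit_iff_exists_and_exists.2
      ⟨⟨v * z, by rw [← mul_assoc, hz]⟩, ⟨z' * v, by rw [mul_assoc, hz']⟩⟩

theorem isSemisimpleRing_residueField_monoidAlgebra (hG : IsUnit (Nat.card G : O)) :
    IsSemisimpleRing (IsLocalRing.ResidueField O)[G] := by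
  have : NeZero (Nat.card G : IsLocalRing.ResidueField O) :=
    ⟨by simpa using (hG.map (IsLocalRing.residue O)).ne_zero⟩
  infer_instance

end Reduction

section Maschke

variable {O G : Type*} [CommRing O] [Group G] [Finite G]

theorem exists_forall_apply_eq_of_surjective {V M : Type*} [AddCommGroup V] [Module O V]
    [Module O[G] V] [IsScalarTower O O[G] V] [AddCommGroup M] [Module O M] [Module O[G] M]
    [IsScalarTower O O[G] M] [Module.Projective O M] (hG : IsUnit (Nat.card G : O))
    (φ : V →ₗ[O[G]] M) (hφ : Function.Surjective φ) :
    ∃ s : M →ₗ[O[G]] V, ∀ m, φ (s m) = m := by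
  have := Fintype.ofFinite G
  obtain ⟨s₀, hs₀⟩ := Module.projective_lifting_property (φ.restrictScalars O) LinearMap.id hφ
  refine ⟨s₀.equivariantProjection G, fun m => ?_⟩
  have hconj (g : G) : φ (s₀.conjugate g m) = m := by
    have hs₀m (m : M) : φ (s₀ m) = m := LinearMap.congr_fun hs₀ m
    rw [LinearMap.conjugate_apply, map_smul, hs₀m, smul_smul, MonoidAlgebra.single_mul_single,
      inv_mul_cancel, mul_one, ← MonoidAlgebra.one_def, one_smul]
  rw [LinearMap.equivariantProjection_apply, LinearMap.map_smul_of_tower, map_sum,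
    Finset.sum_congr rfl fun g _ => hconj g, Finset.sum_const, Finset.card_univ,
    ← Nat.cast_smul_eq_nsmul O, smul_smul, Fintype.card_eq_nat_card,
    Ring.inverse_mul_cancel _ hG, one_smul]

/-- The map `O[G] → O[G] v` splits, and the splitting sends `v` to an idempotent generating the
same left ideal as `e`. Hence `O[G] e → O[G] v` is injective. -/
theorem IsPrimitiveIdempotent.eq_zero_of_smul_eq_zero [IsDomain O] [IsPrincipalIdealRing O]
    {M : Type*} [AddCommGroup M] [Module O M] [Module O[G] M] [IsScalarTower O O[G] M]
    [Module.IsTorsionFree O M] (hG : IsUnit (Nat.card G : O)) {e r : O[G]}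
    (he : IsPrimitiveIdempotent e) {v : M} (hv : v ≠ 0) (hev : e • v = v) (hr : r * e = r)
    (hrv : r • v = 0) : r = 0 := by
  let N : Submodule O[G] M := Submodule.span O[G] {v}
  have : Module.Finite O N := Module.Finite.trans O[G] N
  let v' : N := ⟨v, Submodule.mem_span_singleton_self v⟩
  have hev' : e • v' = v' := Subtype.ext hev
  have hrv' : r • v' = 0 := Subtype.ext hrv
  obtain ⟨s, hs⟩ := exists_forall_apply_eq_of_surjective hG (LinearMap.toSpanSingleton O[G] N v')
    fun ⟨m, hm⟩ => (Submodule.mem_span_singleton.1 hm).imp fun a ha => Subtype.ext ha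
  set t := s v' with ht
  have htv : t • v' = v' := hs v'
  have het : e * t = t := by rw [← smul_eq_mul, ht, ← map_smul, hev']
  have htt : t * t = t := by rw [← smul_eq_mul, ht, ← map_smul, ← ht, htv]
  have hrt : r * t = 0 := by rw [← smul_eq_mul, ht, ← map_smul, hrv', map_zero]
  have hte : t * e = e := by
    refine (he.eq_zero_or_eq (t * e) ?_ ?_).resolve_left fun h => hv ?_
    · exact he.mem_corner_iff.2 ⟨by rw [← mul_assoc, het], by rw [mul_assoc, he.mul_self]⟩
    · rw [IsIdempotentElem, mul_assoc, ← mul_assoc e, het, ← mul_assoc, htt]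
    · have : (t * e) • v' = v' := by rw [mul_smul, hev', htv]
      rw [h, zero_smul] at this
      exact congrArg Subtype.val this.symm
  rw [← hr, ← hte, ← mul_assoc, hrt, zero_mul]

end Maschke

section Action

variable (R : Type*) {K G V : Type*} [CommRing R] [Field K] [Algebra R K] [Group G]
  [AddCommGroup V] [Module K V] (ρ : Representation K G V)

/-- The action of the group ring `R[G]` on a representation over an `R`-algebra `K`. -/
noncomputable def asRingHomOver : R[G] →+* Module.End K V :=
  ρ.asAlgebraHom.toRingHom.comp (MonoidAlgebra.mapRingHom G (algebraMap R K))

theorem asRingHomOver_single (g : G) (c : R) :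
    asRingHomOver R ρ (MonoidAlgebra.single g c) = algebraMap R K c • ρ g := by
  simp [asRingHomOver]

theorem asRingHomOver_smul (c : R) (x : R[G]) :
    asRingHomOver R ρ (c • x) = algebraMap R K c • asRingHomOver R ρ x := by
  have : c • x = MonoidAlgebra.single 1 c * x := by
    rw [Algebra.smul_def, MonoidAlgebra.coe_algebraMap, Function.comp_apply,
      Algebra.algebraMap_self, RingHom.id_apply]
  rw [this, map_mul, asRingHomOver_single, map_one, smul_mul_assoc, one_mul]

theorem asRingHomOver_mapRingHom (k : Type*) [CommRing k] [Algebra R k] [Algebra k K]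
    [IsScalarTower R k K] (x : R[G]) :
    asRingHomOver k ρ (MonoidAlgebra.mapRingHom G (algebraMap R k) x) = asRingHomOver R ρ x := by
  rw [asRingHomOver, asRingHomOver, RingHom.comp_apply, RingHom.comp_apply, ← RingHom.comp_apply,
    IsScalarTower.algebraMap_eq R k K]
  ext g
  simp

variable {R ρ}

theorem asRingHomOver_aeval_apply {x : R[G]} {t : K} {v : V}
    (hx : asRingHomOver R ρ x v = t • v) (P : Polynomial R) :
    asRingHomOver R ρ (Polynomial.aeval x P) v = Polynomial.aeval t P • v := by
  have hpow (n : ℕ) : asRingHomOver R ρ (x ^ n) v = t ^ n • v := by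
    induction n with
    | zero => simp
    | succ n ih => rw [pow_succ, map_mul, Module.End.mul_apply, hx, map_smul, ih, smul_smul,
        pow_succ, mul_comm]
  induction P using Polynomial.induction_on' with
  | add p q hp hq => simp only [map_add, LinearMap.add_apply, hp, hq, add_smul]
  | monomial n a =>
    rw [Polynomial.aeval_monomial, Polynomial.aeval_monomial, ← Algebra.smul_def,
      asRingHomOver_smul, LinearMap.smul_apply, hpow, smul_smul]

theorem exists_asRingHomOver_apply_eq_smul_of_mem_span {S : Set R[G]} {v : V}
    (hS : ∀ x ∈ S, ∃ t : K, asRingHomOver R ρ x v = t • v) {x : R[G]}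
    (hx : x ∈ Submodule.span R S) : ∃ t : K, asRingHomOver R ρ x v = t • v := by
  induction hx using Submodule.span_induction with
  | mem x hx => exact hS x hx
  | zero => exact ⟨0, by simp⟩
  | add x y _ _ hx hy =>
    obtain ⟨t, ht⟩ := hx
    obtain ⟨u, hu⟩ := hy
    exact ⟨t + u, by rw [map_add, LinearMap.add_apply, ht, hu, add_smul]⟩
  | smul c x _ hx =>
    obtain ⟨t, ht⟩ := hx
    exact ⟨algebraMap R K c * t, by
      rw [asRingHomOver_smul, LinearMap.smul_apply, ht, smul_smul]⟩

theorem isIntegral_of_asRingHomOver_apply_eq_smul [Finite G] {x : R[G]} {t : K} {v : V}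
    (hv : v ≠ 0) (hx : asRingHomOver R ρ x v = t • v) : IsIntegral R t := by
  obtain ⟨P, hP, hPx⟩ := IsIntegral.of_finite R x
  refine ⟨P, hP, ?_⟩
  have hPv := asRingHomOver_aeval_apply hx P
  rw [Polynomial.aeval_def, hPx, map_zero, LinearMap.zero_apply] at hPv
  exact (smul_eq_zero.1 hPv.symm).resolve_right hv

theorem IsPrimitiveIdempotent.eq_zero_of_asRingHomOver_apply_eq_zero [Finite G] [IsDomain R]
    [IsPrincipalIdealRing R] [FaithfulSMul R K] (hG : IsUnit (Nat.card G : R)) {e r : R[G]}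
    (he : IsPrimitiveIdempotent e) {v : V} (hv : v ≠ 0) (hev : asRingHomOver R ρ e v = v)
    (hr : r * e = r) (hrv : asRingHomOver R ρ r v = 0) : r = 0 := by
  let _ : Module R[G] V := Module.compHom V (asRingHomOver R ρ)
  let _ : Module R V := Module.compHom V (algebraMap R K)
  have : IsScalarTower R R[G] V :=
    ⟨fun c x w => LinearMap.congr_fun (asRingHomOver_smul R ρ c x) w⟩
  have : Module.IsTorsionFree R V := ⟨fun c hc w w' h =>
    smul_right_injective V ((map_ne_zero_iff _ (FaithfulSMul.algebraMap_injective R K)).2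
      hc.ne_zero) h⟩
  exact he.eq_zero_of_smul_eq_zero hG hv hev hr hrv

end Action

section CornerEigenvector

variable {O K G V : Type*} [CommRing O] [Field K] [Algebra O K] [Group G] [AddCommGroup V]
  [Module K V] {ρ : Representation K G V} {e x : O[G]} {v : V}

/-- A vector fixed by `e` on which the corner `e O[G] e` acts through scalars of `K`. -/
structure IsCornerEigenvector (e : O[G]) (ρ : Representation K G V) (v : V) : Prop where
  ne_zero : v ≠ 0
  apply_eq : asRingHomOver O ρ e v = v
  exists_apply_eq_smul : ∀ x ∈ corner e, ∃ t : K, asRingHomOver O ρ x v = t • v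

variable [Finite G]

theorem IsCornerEigenvector.exists_apply_eq_coe_smul (hv : IsCornerEigenvector e ρ v)
    (hx : x ∈ corner e) : ∃ t : integralClosure O K, asRingHomOver O ρ x v = (t : K) • v := by
  obtain ⟨t, ht⟩ := hv.exists_apply_eq_smul x hx
  exact ⟨⟨t, isIntegral_of_asRingHomOver_apply_eq_smul hv.ne_zero ht⟩, ht⟩

variable [IsDomain O] [IsDiscreteValuationRing O] [FaithfulSMul O K]

/-- Scaling the roots of an integral equation of `t` by `c` gives a polynomial that kills `x` and
reduces to a power of `X`. -/
theorem IsPrimitiveIdempotent.isNilpotent_reduction (hG : IsUnit (Nat.card G : O))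
    (he : IsPrimitiveIdempotent e) (hv : v ≠ 0) (hev : asRingHomOver O ρ e v = v) {c : O}
    (hc : c ∈ IsLocalRing.maximalIdeal O) (hx : x ∈ corner e) {t : K} (ht : IsIntegral O t)
    (hxv : asRingHomOver O ρ x v = (algebraMap O K c * t) • v) :
    IsNilpotent (reduction O G x) := by
  obtain ⟨P, hP, hPt⟩ := ht
  have hzero : Polynomial.aeval x (P.scaleRoots c) * e = 0 := by
    refine he.eq_zero_of_asRingHomOver_apply_eq_zero hG hv hev
      (by rw [mul_assoc, he.mul_self]) ?_
    rw [map_mul, Module.End.mul_apply, hev, asRingHomOver_aeval_apply hxv,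
      Polynomial.aeval_def, Polynomial.scaleRoots_eval₂_mul, hPt, mul_zero, zero_smul]
  set n := (P.map (IsLocalRing.residue O)).natDegree with hn
  have hred : reduction O G x ^ n * reduction O G e = 0 := by
    have h := congrArg (reduction O G) hzero
    rwa [map_mul, reduction_aeval, Polynomial.map_scaleRoots _ _ _ (by simp [hP.leadingCoeff]),
      (IsLocalRing.residue_eq_zero_iff c).2 hc, Polynomial.scaleRoots_zero,
      (hP.map _).leadingCoeff, one_smul, map_pow, Polynomial.aeval_X, map_zero, ← hn] at h
  refine ⟨n + 1, ?_⟩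
  calc reduction O G x ^ (n + 1)
      = reduction O G x ^ n * reduction O G (e * x) := by
        rw [(he.mem_corner_iff.1 hx).1, pow_succ]
    _ = 0 := by rw [map_mul, ← mul_assoc, hred, zero_mul]

theorem IsPrimitiveIdempotent.isNilpotent_reduction_of_dvd (hG : IsUnit (Nat.card G : O))
    (he : IsPrimitiveIdempotent e) (hv : IsCornerEigenvector e ρ v) {ϖ : O}
    (hϖ : Irreducible ϖ) (hx : x ∈ corner e) {t : integralClosure O K}
    (hxv : asRingHomOver O ρ x v = (t : K) • v)
    (hdvd : algebraMap O (integralClosure O K) ϖ ∣ t) : IsNilpotent (reduction O G x) := by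
  obtain ⟨a, rfl⟩ := hdvd
  refine he.isNilpotent_reduction hG hv.ne_zero hv.apply_eq ?_ hx a.2 hxv
  exact hϖ.maximalIdeal_eq ▸ Ideal.mem_span_singleton_self ϖ

/-- The eigenvalue `t` of a lift `x` of an idempotent of the reduced corner satisfies
`ϖ ∣ t * (t - 1)`, so primality forces `x` or `x - e` to be nilpotent modulo `ϖ`. -/
theorem IsPrimitiveIdempotent.reduction_of_prime (hG : IsUnit (Nat.card G : O))
    (he : IsPrimitiveIdempotent e) (hv : IsCornerEigenvector e ρ v) {ϖ : O}
    (hϖ : Irreducible ϖ) (hprime : Prime (algebraMap O (integralClosure O K) ϖ)) :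
    IsPrimitiveIdempotent (reduction O G e) where
  isIdempotentElem := he.isIdempotentElem.map _
  ne_zero h := he.ne_zero (eq_zero_of_isIdempotentElem_of_map_eq_zero he.isIdempotentElem h)
  eq_zero_or_eq b hb hbb := by
    obtain ⟨x, hx, rfl⟩ := exists_mem_corner_map_eq reduction_surjective hb
    have hxx : x * x - x ∈ corner e := sub_mem_corner (mul_mem hx hx) hx
    obtain ⟨y, hy, hxy⟩ := exists_mem_corner_eq_smul_of_reduction_eq_zero hϖ he.isIdempotentElem
      hxx (by rw [map_sub, map_mul, hbb.eq, sub_self])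
    obtain ⟨t, ht⟩ := hv.exists_apply_eq_coe_smul hx
    obtain ⟨s, hs⟩ := hv.exists_apply_eq_coe_smul hy
    have hxe : x - e ∈ corner e := sub_mem_corner hx (self_mem_corner he.isIdempotentElem)
    have hxe_apply : asRingHomOver O ρ (x - e) v = ((t - 1 : integralClosure O K) : K) • v := by
      simp [hv.apply_eq, ht, sub_smul]
    have hts : t * (t - 1) = algebraMap O _ ϖ * s := by
      refine Subtype.ext (smul_left_injective K hv.ne_zero ?_)
      have h := congrArg (fun r => asRingHomOver O ρ r v) hxy
      simp only [map_sub, map_mul, asRingHomOver_smul, LinearMap.sub_apply, Module.End.mul_apply,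
        LinearMap.smul_apply, ht, hs, map_smul, smul_smul, ← sub_smul] at h
      simpa [mul_sub] using h
    have hb' := isIdempotentElem_sub_of_mem_corner (he.isIdempotentElem.map _) hb hbb
    refine (hprime.dvd_or_dvd ⟨s, hts⟩).imp (fun h => ?_) fun h => ?_
    · exact eq_zero_of_isIdempotentElem_of_isNilpotent hbb
        (he.isNilpotent_reduction_of_dvd hG hv hϖ hx ht h)
    · refine (sub_eq_zero.1 (eq_zero_of_isIdempotentElem_of_isNilpotent hb' ?_)).symm
      rw [← map_sub, ← neg_sub, map_neg, isNilpotent_neg_iff]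
      exact he.isNilpotent_reduction_of_dvd hG hv hϖ hxe hxe_apply h

end CornerEigenvector

section FullAction

variable {O G : Type*} (k : Type*) [CommRing O] [IsDomain O] [Field k] [Algebra O k]
  [IsFractionRing O k] [Group G] [Finite G]

theorem exists_mapRingHom_eq_smul (x : k[G]) : ∃ c : O, c ≠ 0 ∧
    ∃ y : O[G], MonoidAlgebra.mapRingHom G (algebraMap O k) y = algebraMap O k c • x := by
  obtain ⟨⟨c, hc⟩, hcx⟩ :=
    IsLocalization.exist_integer_multiples_of_finite (nonZeroDivisors O) x.coeff
  choose y hy using hcx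
  refine ⟨c, nonZeroDivisors.ne_zero hc,
    MonoidAlgebra.ofCoeff (Finsupp.equivFunOnFinite.symm y), ?_⟩
  ext g
  simp [hy, Algebra.smul_def]

variable {k} {K V : Type*} [Field K] [Algebra O K] [Algebra k K] [IsScalarTower O k K]
  [AddCommGroup V] [Module K V] {ρ : Representation K G V}

theorem exists_asRingHomOver_eq_smul (x : k[G]) : ∃ c : O, c ≠ 0 ∧
    ∃ y : O[G], asRingHomOver O ρ y = algebraMap O K c • asRingHomOver k ρ x := by
  obtain ⟨c, hc, y, hy⟩ := exists_mapRingHom_eq_smul (O := O) k x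
  refine ⟨c, hc, y, ?_⟩
  rw [← asRingHomOver_mapRingHom O ρ k, hy, asRingHomOver_smul,
    ← IsScalarTower.algebraMap_apply O k K]

/-- A linear form vanishing on `w` but not on a second vector `w'` fixed by `e` would give an
element of `O[G] e` killing `w` but not `w'`. -/
theorem IsPrimitiveIdempotent.exists_eq_smul [IsPrincipalIdealRing O]
    (hG : IsUnit (Nat.card G : O)) {e : O[G]} (he : IsPrimitiveIdempotent e)
    (hsurj : Function.Surjective (asRingHomOver k ρ)) {w w' : V} (hw : w ≠ 0)
    (hew : asRingHomOver O ρ e w = w) (hew' : asRingHomOver O ρ e w' = w') :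
    ∃ t : K, w' = t • w := by
  have hinj : Function.Injective (algebraMap O K) := by
    rw [IsScalarTower.algebraMap_eq O k K]
    exact (algebraMap k K).injective.comp (IsFractionRing.injective O k)
  have := (faithfulSMul_iff_algebraMap_injective O K).2 hinj
  by_contra! hw'
  obtain ⟨f, hfw', hf⟩ := Submodule.exists_le_ker_of_notMem (p := K ∙ w) (v := w')
    fun h => (Submodule.mem_span_singleton.1 h).elim fun t ht => hw' t ht.symm
  have hfw : f w = 0 := hf (Submodule.mem_span_singleton_self w)
  obtain ⟨x, hx⟩ := hsurj (f.smulRight w')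
  obtain ⟨c, hc, y, hy⟩ := exists_asRingHomOver_eq_smul (O := O) (ρ := ρ) x
  have hye : y * e = 0 := by
    refine he.eq_zero_of_asRingHomOver_apply_eq_zero hG hw hew
      (by rw [mul_assoc, he.mul_self]) ?_
    simp [map_mul, hew, hy, hx, hfw]
  have hcontra := congrArg (fun r => asRingHomOver O ρ r w') hye
  have hw'0 : w' ≠ 0 := fun h => hfw' (by rw [h, map_zero])
  simp [hew', hy, hx, hfw', hw'0, map_eq_zero_iff _ hinj, hc] at hcontra

theorem IsPrimitiveIdempotent.exists_isCornerEigenvector [IsPrincipalIdealRing O]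
    (hG : IsUnit (Nat.card G : O)) {e : O[G]} (he : IsPrimitiveIdempotent e)
    (hsurj : Function.Surjective (asRingHomOver k ρ)) (hne : asRingHomOver O ρ e ≠ 0) :
    ∃ v, IsCornerEigenvector e ρ v := by
  obtain ⟨u, hu⟩ : ∃ u, asRingHomOver O ρ e u ≠ 0 := by
    by_contra! h
    exact hne (LinearMap.ext h)
  have happly {x : O[G]} (hx : e * x = x) (w : V) :
      asRingHomOver O ρ e (asRingHomOver O ρ x w) = asRingHomOver O ρ x w := by
    rw [← Module.End.mul_apply, ← map_mul, hx]
  refine ⟨_, hu, happly he.mul_self u, fun x hx => ?_⟩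
  exact he.exists_eq_smul hG hsurj hu (happly he.mul_self u)
    (happly (he.mem_corner_iff.1 hx).1 _)

end FullAction

section CornerOfPrimitiveReduction

variable {O G : Type*} [CommRing O] [IsDomain O] [IsDiscreteValuationRing O] [Group G] [Finite G]
  {e : O[G]}

/-- Modulo the maximal ideal the corner is a finite field, whose nonzero elements are the powers of
a generator; Nakayama lifts this to `O`. -/
theorem exists_forall_mem_corner_mem_span_mul_pow [Finite (IsLocalRing.ResidueField O)]
    (hG : IsUnit (Nat.card G : O)) (he : IsIdempotentElem e)
    (hprim : IsPrimitiveIdempotent (reduction O G e)) :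
    ∃ a ∈ corner e, ∀ x ∈ corner e, x ∈ Submodule.span O (Set.range fun n : ℕ => e * a ^ n) := by
  have := isSemisimpleRing_residueField_monoidAlgebra hG
  have : Finite (IsLocalRing.ResidueField O)[G] :=
    Module.finite_of_finite (IsLocalRing.ResidueField O)
  obtain ⟨_, hg, hpow⟩ := hprim.exists_forall_mem_corner_eq_mul_pow
  obtain ⟨a, ha, rfl⟩ := exists_mem_corner_map_eq reduction_surjective hg
  refine ⟨a, ha, fun x hx => ?_⟩
  obtain ⟨ϖ, hϖ⟩ := IsDiscreteValuationRing.exists_irreducible O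
  let C : Submodule O O[G] := LinearMap.range (LinearMap.mulLeftRight O (e, e))
  have mem_smul {y : O[G]} (hy : y ∈ corner e) (hy_red : reduction O G y = 0) :
      y ∈ IsLocalRing.maximalIdeal O • C := by
    obtain ⟨z, hz, rfl⟩ := exists_mem_corner_eq_smul_of_reduction_eq_zero hϖ he hy hy_red
    exact Submodule.smul_mem_smul (hϖ.maximalIdeal_eq ▸ Ideal.mem_span_singleton_self ϖ) hz
  suffices hC : C ≤ Submodule.span O (Set.range fun n : ℕ => e * a ^ n) from hC hx
  refine Submodule.le_of_le_smul_of_le_jacobson_bot (I := IsLocalRing.maximalIdeal O)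
    (IsNoetherian.noetherian C) (IsLocalRing.maximalIdeal_le_jacobson _) fun y hy => ?_
  by_cases hy_red : reduction O G y = 0
  · exact Submodule.mem_sup_right (mem_smul hy hy_red)
  obtain ⟨n, hn⟩ := hpow _ (map_mem_corner _ hy) hy_red
  have hmem : e * a ^ n ∈ corner e := by
    have hcomm : Commute e a := ((mem_corner_iff he).1 ha).1.trans ((mem_corner_iff he).1 ha).2.symm
    exact (mem_corner_iff he).2
      ⟨by rw [← mul_assoc, he.eq], by rw [mul_assoc, ← (hcomm.pow_right n).eq, ← mul_assoc, he.eq]⟩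
  rw [← add_sub_cancel (e * a ^ n) y]
  refine Submodule.add_mem_sup (Submodule.subset_span ⟨n, rfl⟩)
    (mem_smul (sub_mem_corner hy hmem) ?_)
  rw [map_sub, hn, map_mul, map_pow, sub_self]

theorem exists_isCornerEigenvector_of_isAlgClosed [Finite (IsLocalRing.ResidueField O)]
    {L V : Type*} [Field L] [IsAlgClosed L] [Algebra O L] [AddCommGroup V] [Module L V]
    [FiniteDimensional L V] {ρ : Representation L G V} (hG : IsUnit (Nat.card G : O))
    (he : IsIdempotentElem e) (hprim : IsPrimitiveIdempotent (reduction O G e))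
    (hne : asRingHomOver O ρ e ≠ 0) : ∃ v, IsCornerEigenvector e ρ v := by
  obtain ⟨a, ha, hspan⟩ := exists_forall_mem_corner_mem_span_mul_pow hG he hprim
  let S := LinearMap.range (asRingHomOver O ρ e)
  have apply_eq {w : V} (hw : w ∈ S) : asRingHomOver O ρ e w = w := by
    obtain ⟨w, rfl⟩ := hw
    rw [← Module.End.mul_apply, ← map_mul, he.eq]
  have apply_mem (w : V) (_ : w ∈ S) : asRingHomOver O ρ a w ∈ S :=
    ⟨asRingHomOver O ρ a w, by rw [← Module.End.mul_apply, ← map_mul, ((mem_corner_iff he).1 ha).1]⟩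
  have : Nontrivial S :=
    (Submodule.nontrivial_iff_ne_bot).2 fun h => hne (LinearMap.range_eq_bot.1 h)
  obtain ⟨μ, hμ⟩ := Module.End.exists_eigenvalue ((asRingHomOver O ρ a).restrict apply_mem)
  obtain ⟨⟨v, hvS⟩, hv⟩ := hμ.exists_hasEigenvector
  have hav : asRingHomOver O ρ a v = μ • v := congrArg Subtype.val hv.apply_eq_smul
  refine ⟨v, fun h => hv.2 (Subtype.ext h), apply_eq hvS, fun x hx => ?_⟩
  refine exists_asRingHomOver_apply_eq_smul_of_mem_span ?_ (hspan x hx)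
  rintro _ ⟨n, rfl⟩
  have hpow := asRingHomOver_aeval_apply hav (Polynomial.X ^ n)
  rw [Polynomial.aeval_X_pow, Polynomial.aeval_X_pow] at hpow
  exact ⟨μ ^ n, by rw [map_mul, Module.End.mul_apply, hpow, map_smul, apply_eq hvS]⟩

end CornerOfPrimitiveReduction

section Cyclic

variable {K G V : Type*} (k : Type*) [Field k] [Field K] [Algebra k K] [Group G] [AddCommGroup V]
  [Module K V] {ρ : Representation K G V} {v : V}

theorem surjective_asRingHomOver_of_forall_commute [Finite G] [NeZero (Nat.card G : k)]
    [FiniteDimensional K V]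
    (hcomm : ∀ φ : V →+ V,
      (∀ (x : k[G]) w, φ (asRingHomOver k ρ x w) = asRingHomOver k ρ x (φ w)) →
        ∃ t : K, ∀ w, φ w = t • w) :
    Function.Surjective (asRingHomOver k ρ) := by
  intro f
  let _ : Module k[G] V := Module.compHom V (asRingHomOver k ρ)
  let f' : Module.End (Module.End k[G] V) V :=
    { f with
      map_smul' := fun φ w => by
        obtain ⟨t, ht⟩ := hcomm φ.toAddMonoidHom φ.map_smul
        have hφ (w : V) : φ w = t • w := ht w
        simp [hφ] }
  classical
  obtain ⟨x, hx⟩ := jacobson_density f' (Finset.univ.image (Module.finBasis K V))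
  refine ⟨x, (Module.finBasis K V).ext fun i => ?_⟩
  exact (hx _ (by simp)).symm

theorem finiteDimensional_of_forall_exists_apply_eq [Finite G]
    (hcyc : ∀ w, ∃ x : k[G], asRingHomOver k ρ x v = w) : FiniteDimensional K V := by
  refine Module.Finite.of_surjective
    ((LinearMap.applyₗ v).comp ρ.asAlgebraHom.toLinearMap) fun w => ?_
  obtain ⟨x, rfl⟩ := hcyc w
  exact ⟨MonoidAlgebra.mapRingHom G (algebraMap k K) x, rfl⟩

variable {k}

theorem surjective_asRingHomOver_of_isCornerEigenvector [Finite G] [NeZero (Nat.card G : k)]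
    (hcyc : ∀ w, ∃ x : k[G], asRingHomOver k ρ x v = w) {e : k[G]}
    (hv : IsCornerEigenvector e ρ v) : Function.Surjective (asRingHomOver k ρ) := by
  have := finiteDimensional_of_forall_exists_apply_eq k hcyc
  refine surjective_asRingHomOver_of_forall_commute k fun φ hφ => ?_
  obtain ⟨y, hy⟩ := hcyc (φ v)
  obtain ⟨t, ht⟩ := hv.exists_apply_eq_smul (e * y * e) ⟨y, rfl⟩
  refine ⟨t, fun w => ?_⟩
  have hφv : φ v = t • v := by
    rw [← ht, map_mul, map_mul, Module.End.mul_apply, Module.End.mul_apply, hv.apply_eq, hy,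
      ← hφ, hv.apply_eq]
  obtain ⟨x, rfl⟩ := hcyc w
  rw [hφ, hφv, map_smul]

end Cyclic

section PrimeOfPrimitiveReduction

variable {O K G V : Type*} [CommRing O] [IsDomain O] [IsDiscreteValuationRing O] [Field K]
  [Algebra O K] [FaithfulSMul O K] [Group G] [Finite G] [AddCommGroup V] [Module K V]
  {ρ : Representation K G V} {e x : O[G]} {v : V}

theorem IsCornerEigenvector.reduction_eq_zero_iff_dvd (hv : IsCornerEigenvector e ρ v)
    (hG : IsUnit (Nat.card G : O)) (he : IsPrimitiveIdempotent e)
    (hprim : IsPrimitiveIdempotent (reduction O G e)) {ϖ : O} (hϖ : Irreducible ϖ)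
    (hx : x ∈ corner e) {t : integralClosure O K} (hxv : asRingHomOver O ρ x v = (t : K) • v) :
    reduction O G x = 0 ↔ algebraMap O (integralClosure O K) ϖ ∣ t := by
  have := isSemisimpleRing_residueField_monoidAlgebra hG
  refine ⟨fun hx_red => ?_, fun hdvd => hprim.eq_zero_of_isNilpotent (map_mem_corner _ hx)
    (he.isNilpotent_reduction_of_dvd hG hv hϖ hx hxv hdvd)⟩
  obtain ⟨y, hy, rfl⟩ :=
    exists_mem_corner_eq_smul_of_reduction_eq_zero hϖ he.isIdempotentElem hx hx_red
  obtain ⟨s, hs⟩ := hv.exists_apply_eq_coe_smul hy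
  refine ⟨s, Subtype.ext (smul_left_injective K hv.ne_zero ?_)⟩
  change (t : K) • v = (algebraMap O K ϖ * s) • v
  rw [← hxv, asRingHomOver_smul, LinearMap.smul_apply, hs, smul_smul]

/-- If `i • t` is an eigenvalue of `x` with `i` irreducible, then `x` vanishes modulo `i`, so that
`x = i • y` and `t` is an eigenvalue of `y`. -/
theorem IsCornerEigenvector.exists_apply_eq_of_mul (hv : IsCornerEigenvector e ρ v)
    (hG : IsUnit (Nat.card G : O)) (he : IsPrimitiveIdempotent e)
    (hprim : IsPrimitiveIdempotent (reduction O G e)) {c : O} (hc : c ≠ 0)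
    {t : integralClosure O K} (hx : x ∈ corner e)
    (hxv : asRingHomOver O ρ x v = (algebraMap O K c * t) • v) :
    ∃ y ∈ corner e, asRingHomOver O ρ y v = (t : K) • v := by
  induction c using WfDvdMonoid.induction_on_irreducible generalizing x with
  | zero => exact absurd rfl hc
  | unit c hc_unit =>
    obtain ⟨c, rfl⟩ := hc_unit
    obtain ⟨z, rfl⟩ := hx
    refine ⟨(↑c⁻¹ : O) • (e * z * e), ⟨(↑c⁻¹ : O) • z, by simp⟩, ?_⟩
    rw [asRingHomOver_smul, LinearMap.smul_apply, hxv, smul_smul, ← mul_assoc, ← map_mul,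
      Units.inv_mul, map_one, one_mul]
  | mul c i hc_ne hi ih =>
    have hx_red : reduction O G x = 0 := by
      refine (hv.reduction_eq_zero_iff_dvd hG he hprim hi hx
        (t := algebraMap O _ i * (algebraMap O _ c * t)) ?_).2 (dvd_mul_right _ _)
      rw [hxv, map_mul, mul_assoc]
      rfl
    obtain ⟨y, hy, rfl⟩ :=
      exists_mem_corner_eq_smul_of_reduction_eq_zero hi he.isIdempotentElem hx hx_red
    refine ih hc_ne hy (smul_right_injective V
      ((map_ne_zero_iff _ (FaithfulSMul.algebraMap_injective O K)).2 hi.ne_zero) ?_)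
    simp only
    rw [← LinearMap.smul_apply, ← asRingHomOver_smul, hxv, map_mul, mul_assoc, smul_smul]

theorem IsCornerEigenvector.exists_apply_eq {k : Type*} [Field k] [Algebra O k]
    [IsFractionRing O k] [Algebra k K] [IsScalarTower O k K] (hv : IsCornerEigenvector e ρ v)
    (hcyc : ∀ w, ∃ x : k[G], asRingHomOver k ρ x v = w) (hG : IsUnit (Nat.card G : O))
    (he : IsPrimitiveIdempotent e) (hprim : IsPrimitiveIdempotent (reduction O G e))
    (t : integralClosure O K) : ∃ y ∈ corner e, asRingHomOver O ρ y v = (t : K) • v := by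
  obtain ⟨x, hx⟩ := hcyc ((t : K) • v)
  obtain ⟨c, hc, y, hy⟩ := exists_asRingHomOver_eq_smul (O := O) (ρ := ρ) x
  refine hv.exists_apply_eq_of_mul hG he hprim hc (x := e * y * e) ⟨y, rfl⟩ ?_
  simp only [map_mul, Module.End.mul_apply, hv.apply_eq, hy, LinearMap.smul_apply, hx, map_smul,
    smul_smul]

theorem IsCornerEigenvector.prime_algebraMap {k : Type*} [Field k] [Algebra O k]
    [IsFractionRing O k] [Algebra k K] [IsScalarTower O k K] (hv : IsCornerEigenvector e ρ v)
    (hcyc : ∀ w, ∃ x : k[G], asRingHomOver k ρ x v = w) (hG : IsUnit (Nat.card G : O))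
    (he : IsPrimitiveIdempotent e) (hprim : IsPrimitiveIdempotent (reduction O G e)) {ϖ : O}
    (hϖ : Irreducible ϖ) : Prime (algebraMap O (integralClosure O K) ϖ) := by
  have := isSemisimpleRing_residueField_monoidAlgebra hG
  refine ⟨?_, fun hunit => hprim.ne_zero ?_, fun s t hst => ?_⟩
  · exact (map_ne_zero_iff _ (FaithfulSMul.algebraMap_injective O _)).2 hϖ.ne_zero
  · refine (hv.reduction_eq_zero_iff_dvd hG he hprim hϖ (self_mem_corner he.isIdempotentElem)
      (t := 1) ?_).2 hunit.dvd
    rw [hv.apply_eq, OneMemClass.coe_one, one_smul]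
  · obtain ⟨x, hx, hxv⟩ := hv.exists_apply_eq hcyc hG he hprim s
    obtain ⟨y, hy, hyv⟩ := hv.exists_apply_eq hcyc hG he hprim t
    have hxyv : asRingHomOver O ρ (x * y) v = ((s * t : integralClosure O K) : K) • v := by
      rw [map_mul, Module.End.mul_apply, hyv, map_smul, hxv, smul_smul, mul_comm]
      rfl
    have hxy := (hv.reduction_eq_zero_iff_dvd hG he hprim hϖ (mul_mem hx hy) hxyv).2 hst
    rw [map_mul] at hxy
    exact (hprim.eq_zero_or_eq_zero_of_mul_eq_zero (map_mem_corner _ hx) (map_mem_corner _ hy)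
      hxy).imp (hv.reduction_eq_zero_iff_dvd hG he hprim hϖ hx hxv).1
      (hv.reduction_eq_zero_iff_dvd hG he hprim hϖ hy hyv).1

end PrimeOfPrimitiveReduction

section Character

variable {R K L G V W : Type*} [CommRing R] [Field K] [Field L] [Algebra R K] [Algebra R L]
  [Algebra K L] [IsScalarTower R K L] [Group G] [AddCommGroup V] [Module L V] [AddCommGroup W]
  [Module K W] {ρ : Representation L G V} {σ : Representation K G W}

theorem trace_asRingHomOver (ρ : Representation L G V) (x : R[G]) :
    LinearMap.trace L V (asRingHomOver R ρ x) =
      x.coeff.sum fun g c => algebraMap R L c * ρ.character g := by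
  induction x using MonoidAlgebra.induction_linear with
  | zero => simp
  | add x y hx hy =>
    rw [map_add, map_add, hx, hy, MonoidAlgebra.coeff_add,
      Finsupp.sum_add_index' (by simp) (by simp [add_mul])]
  | single g c =>
    simp [asRingHomOver_single, Representation.character]

theorem trace_asRingHomOver_mem_adjoin {k : Type*} [Field k] [Algebra k L]
    (ρ : Representation L G V) (x : k[G]) :
    LinearMap.trace L V (asRingHomOver k ρ x) ∈
      IntermediateField.adjoin k (Set.range ρ.character) := by
  rw [trace_asRingHomOver]
  exact sum_mem fun g _ => mul_mem (IntermediateField.algebraMap_mem _ _)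
    (IntermediateField.subset_adjoin k _ ⟨g, rfl⟩)

theorem algebraMap_trace_asRingHomOver
    (hσ : ∀ g, algebraMap K L (σ.character g) = ρ.character g) (x : R[G]) :
    algebraMap K L (LinearMap.trace K W (asRingHomOver R σ x)) =
      LinearMap.trace L V (asRingHomOver R ρ x) := by
  simp only [trace_asRingHomOver, Finsupp.sum, map_sum, map_mul, hσ,
    ← IsScalarTower.algebraMap_apply R K L]

theorem trace_eq_algebraMap_trace [Module K V] [IsScalarTower K L V] {ι : Type*} [Finite ι]
    {i : W →ₗ[K] V} (b : Module.Basis ι K W) (B : Module.Basis ι L V) (hB : ∀ l, B l = i (b l))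
    {T : Module.End L V} {S : Module.End K W} (hT : ∀ w, T (i w) = i (S w)) :
    LinearMap.trace L V T = algebraMap K L (LinearMap.trace K W S) := by
  classical
  have := Fintype.ofFinite ι
  have hrepr (l : ι) (w : W) : B.repr (i w) l = algebraMap K L (b.repr w l) := by
    have h : ((B.coord l).restrictScalars K).comp i =
        (Algebra.linearMap K L).comp (b.coord l) := by
      refine b.ext fun m => ?_
      simp [← hB, Finsupp.single_apply, apply_ite (algebraMap K L)]
    exact LinearMap.congr_fun h w
  rw [LinearMap.trace_eq_matrix_trace L B, LinearMap.trace_eq_matrix_trace K b, Matrix.trace,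
    Matrix.trace, map_sum]
  refine Finset.sum_congr rfl fun l _ => ?_
  rw [Matrix.diag_apply, Matrix.diag_apply, LinearMap.toMatrix_apply, LinearMap.toMatrix_apply,
    hB, hT, hrepr]

end Character

section Descent

variable (k : Type*) {L G V : Type*} [Field k] [Field L] [Algebra k L] [Group G] [Finite G]
  [AddCommGroup V] [Module L V] (ρ : Representation L G V) (v : V)

/-- The field of scalars by which elements of `k[G]` act on the vector `v`. For `v = 0` this is
all of `L`. -/
noncomputable def eigenField : IntermediateField k L :=
  Subalgebra.toIntermediateField
    { carrier := {t | ∃ x : k[G], asRingHomOver k ρ x v = t • v}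
      mul_mem' := by
        rintro s t ⟨x, hx⟩ ⟨y, hy⟩
        exact ⟨y * x, by rw [map_mul, Module.End.mul_apply, hx, map_smul, hy, smul_smul]⟩
      add_mem' := by
        rintro s t ⟨x, hx⟩ ⟨y, hy⟩
        exact ⟨x + y, by rw [map_add, LinearMap.add_apply, hx, hy, add_smul]⟩
      algebraMap_mem' := fun c => ⟨c • 1, by
        rw [asRingHomOver_smul, map_one, LinearMap.smul_apply, Module.End.one_apply]⟩ }
    fun t ht => by
      obtain ⟨x, hx⟩ := id ht
      by_cases hv : v = 0
      · exact ⟨0, by simp [hv]⟩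
      · exact Subalgebra.inv_mem_of_algebraic _ (x := ⟨t, ht⟩)
          (isIntegral_of_asRingHomOver_apply_eq_smul hv hx).isAlgebraic

/-- The `k[G]`-submodule generated by `v`, as a vector space over `eigenField k ρ v`. -/
noncomputable def cyclicForm : Submodule (eigenField k ρ v) V where
  carrier := {w | ∃ x : k[G], asRingHomOver k ρ x v = w}
  add_mem' := by
    rintro _ _ ⟨x, rfl⟩ ⟨y, rfl⟩
    exact ⟨x + y, by rw [map_add, LinearMap.add_apply]⟩
  zero_mem' := ⟨0, by simp⟩
  smul_mem' := by
    rintro ⟨t, x, hx⟩ _ ⟨y, rfl⟩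
    refine ⟨y * x, ?_⟩
    rw [map_mul, Module.End.mul_apply, hx, map_smul]
    rfl

/-- The representation of `G` on `cyclicForm k ρ v`. -/
noncomputable def cyclicRep : Representation (eigenField k ρ v) G (cyclicForm k ρ v) where
  toFun g := ((ρ g).restrictScalars (eigenField k ρ v)).restrict (by
    rintro _ ⟨x, rfl⟩
    refine ⟨MonoidAlgebra.single g 1 * x, ?_⟩
    rw [map_mul, asRingHomOver_single, map_one, one_smul]
    rfl)
  map_one' := by ext; simp
  map_mul' g h := by ext; simp

/-- The vector `v`, as an element of `cyclicForm k ρ v`. -/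
noncomputable def cyclicVector : cyclicForm k ρ v := ⟨v, 1, by rw [map_one, Module.End.one_apply]⟩

variable {k ρ v}

theorem coe_asRingHomOver_cyclicRep {R : Type*} [CommRing R] [Algebra R k] [Algebra R L]
    [IsScalarTower R k L] (x : R[G]) (w : cyclicForm k ρ v) :
    (asRingHomOver R (cyclicRep k ρ v) x w : V) = asRingHomOver R ρ x w := by
  induction x using MonoidAlgebra.induction_linear with
  | zero => simp
  | add x y hx hy => simp only [map_add, LinearMap.add_apply, Submodule.coe_add, hx, hy]
  | single g c =>
    rw [asRingHomOver_single, asRingHomOver_single]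
    rfl

theorem exists_asRingHomOver_cyclicVector_eq (w : cyclicForm k ρ v) :
    ∃ x : k[G], asRingHomOver k (cyclicRep k ρ v) x (cyclicVector k ρ v) = w := by
  obtain ⟨_, x, rfl⟩ := w
  exact ⟨x, Subtype.ext (coe_asRingHomOver_cyclicRep x _)⟩

instance finiteDimensional_cyclicForm : FiniteDimensional (eigenField k ρ v) (cyclicForm k ρ v) :=
  finiteDimensional_of_forall_exists_apply_eq k exists_asRingHomOver_cyclicVector_eq

section Basis

variable {ι : Type*} [Finite ι] (b : Module.Basis ι (eigenField k ρ v) (cyclicForm k ρ v))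

theorem linearIndependent_coe_cyclicForm (hv : v ≠ 0)
    (hk : Function.Surjective (asRingHomOver k (cyclicRep k ρ v))) :
    LinearIndependent L fun i => (b i : V) := by
  classical
  have := Fintype.ofFinite ι
  refine Fintype.linearIndependent_iff.2 fun c hc i => ?_
  obtain ⟨x, hx⟩ := hk ((b.coord i).smulRight (cyclicVector k ρ v))
  have hxb (j : ι) : asRingHomOver k ρ x (b j) = if j = i then v else 0 := by
    rw [← coe_asRingHomOver_cyclicRep, hx, LinearMap.smulRight_apply, Module.Basis.coord_apply,
      Module.Basis.repr_self, Finsupp.single_apply]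
    split_ifs <;> simp [cyclicVector]
  have hxc := congrArg (asRingHomOver k ρ x) hc
  simp only [map_sum, map_smul, hxb, map_zero, smul_ite, smul_zero, Finset.sum_ite_eq',
    Finset.mem_univ, if_true] at hxc
  exact (smul_eq_zero.1 hxc).resolve_right hv

theorem span_coe_cyclicForm_eq_top (hv : v ≠ 0)
    (hL : Function.Surjective (asRingHomOver L ρ)) :
    Submodule.span L (Set.range fun i => (b i : V)) = ⊤ := by
  have := Fintype.ofFinite ι
  have coe_mem (w : cyclicForm k ρ v) :
      (w : V) ∈ Submodule.span L (Set.range fun i => (b i : V)) := by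
    rw [← b.sum_repr w, Submodule.coe_sum]
    exact Submodule.sum_mem _ fun i _ =>
      Submodule.smul_mem _ (b.repr w i : L) (Submodule.subset_span ⟨i, rfl⟩)
  refine eq_top_iff.2 fun u _ => ?_
  obtain ⟨f, hf, -⟩ := Submodule.exists_le_ker_of_notMem (p := (⊥ : Submodule L V)) (v := v) hv
  obtain ⟨x, hx⟩ := hL (f.smulRight ((f v)⁻¹ • u))
  have hxv : asRingHomOver L ρ x v = u := by
    rw [hx, LinearMap.smulRight_apply, smul_inv_smul₀ hf]
  rw [← hxv]
  clear hxv hx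
  induction x using MonoidAlgebra.induction_linear with
  | zero => simp
  | add x y hx hy => exact map_add (asRingHomOver L ρ) x y ▸ Submodule.add_mem _ hx hy
  | single g c =>
    rw [asRingHomOver_single]
    exact Submodule.smul_mem _ _ (coe_mem (cyclicRep k ρ v g (cyclicVector k ρ v)))

end Basis

theorem algebraMap_character_cyclicRep (hv : v ≠ 0)
    (hk : Function.Surjective (asRingHomOver k (cyclicRep k ρ v)))
    (hL : Function.Surjective (asRingHomOver L ρ)) (g : G) :
    algebraMap (eigenField k ρ v) L ((cyclicRep k ρ v).character g) = ρ.character g := by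
  let b := Module.finBasis (eigenField k ρ v) (cyclicForm k ρ v)
  let B := Module.Basis.mk (linearIndependent_coe_cyclicForm b hv hk)
    (span_coe_cyclicForm_eq_top b hv hL).ge
  exact (trace_eq_algebraMap_trace (i := (cyclicForm k ρ v).subtype) b B
    (fun l => Module.Basis.mk_apply _ _ l) fun _ => rfl).symm

theorem adjoin_character_eq_eigenField (hv : v ≠ 0)
    (hk : Function.Surjective (asRingHomOver k (cyclicRep k ρ v)))
    (hL : Function.Surjective (asRingHomOver L ρ)) :
    IntermediateField.adjoin k (Set.range ρ.character) = eigenField k ρ v := by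
  have hchar := algebraMap_character_cyclicRep hv hk hL
  refine le_antisymm (IntermediateField.adjoin_le_iff.2 ?_) fun t ht => ?_
  · rintro _ ⟨g, rfl⟩
    exact hchar g ▸ ((cyclicRep k ρ v).character g).2
  · have hv' : cyclicVector k ρ v ∉ (⊥ : Submodule (eigenField k ρ v) (cyclicForm k ρ v)) :=
      fun h => hv (congrArg Subtype.val h)
    obtain ⟨f, hf, -⟩ := Submodule.exists_le_ker_of_notMem hv'
    let t' : eigenField k ρ v := ⟨t, ht⟩
    obtain ⟨x, hx⟩ :=
      hk (f.smulRight ((t' * (f (cyclicVector k ρ v))⁻¹) • cyclicVector k ρ v))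
    have htrace := algebraMap_trace_asRingHomOver hchar x
    rw [hx, LinearMap.trace_smulRight, map_smul, smul_eq_mul, inv_mul_cancel_right₀ hf] at htrace
    exact (htrace ▸ trace_asRingHomOver_mem_adjoin ρ x : algebraMap _ L t' ∈ _)

end Descent

section DescentOfCornerEigenvector

variable {O L G V : Type*} (k : Type*) [CommRing O] [Field k] [Algebra O k] [Field L]
  [Algebra k L] [Algebra O L] [IsScalarTower O k L] [Group G] [Finite G] [AddCommGroup V]
  [Module L V] {ρ : Representation L G V} {e : O[G]} {v : V}

theorem IsCornerEigenvector.cyclicVector (hv : IsCornerEigenvector e ρ v) :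
    IsCornerEigenvector e (cyclicRep k ρ v) (cyclicVector k ρ v) where
  ne_zero h := hv.ne_zero (congrArg Subtype.val h)
  apply_eq := Subtype.ext ((coe_asRingHomOver_cyclicRep e _).trans hv.apply_eq)
  exists_apply_eq_smul x hx := by
    obtain ⟨t, ht⟩ := hv.exists_apply_eq_smul x hx
    have ht_mem : t ∈ eigenField k ρ v :=
      ⟨MonoidAlgebra.mapRingHom G (algebraMap O k) x, by rw [asRingHomOver_mapRingHom, ht]⟩
    exact ⟨⟨t, ht_mem⟩, Subtype.ext ((coe_asRingHomOver_cyclicRep x _).trans ht)⟩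

variable [IsDomain O] [IsFractionRing O k]

theorem IsCornerEigenvector.mapRingHom (hv : IsCornerEigenvector e ρ v) :
    IsCornerEigenvector (MonoidAlgebra.mapRingHom G (algebraMap O k) e) ρ v where
  ne_zero := hv.ne_zero
  apply_eq := by rw [asRingHomOver_mapRingHom, hv.apply_eq]
  exists_apply_eq_smul := by
    rintro _ ⟨z, rfl⟩
    obtain ⟨c, hc, y, hy⟩ := exists_asRingHomOver_eq_smul (O := O) (ρ := ρ) z
    obtain ⟨t, ht⟩ := hv.exists_apply_eq_smul (e * y * e) ⟨y, rfl⟩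
    have hc' : algebraMap O L c ≠ 0 := by
      rw [IsScalarTower.algebraMap_apply O k L]
      simpa using hc
    refine ⟨(algebraMap O L c)⁻¹ * t, ?_⟩
    rw [mul_smul, ← ht, eq_inv_smul_iff₀ hc']
    simp only [map_mul, Module.End.mul_apply, asRingHomOver_mapRingHom, hy, LinearMap.smul_apply,
      map_smul]

variable [NeZero (Nat.card G : k)]

theorem IsCornerEigenvector.surjective_asRingHomOver_cyclicRep (hv : IsCornerEigenvector e ρ v) :
    Function.Surjective (asRingHomOver k (cyclicRep k ρ v)) :=
  surjective_asRingHomOver_of_isCornerEigenvector exists_asRingHomOver_cyclicVector_eq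
    (hv.cyclicVector k |>.mapRingHom k)

theorem IsCornerEigenvector.exists_algebraMap_character_eq (hv : IsCornerEigenvector e ρ v)
    (hL : Function.Surjective (asRingHomOver L ρ)) :
    ∃ (n : ℕ) (σ : Representation (IntermediateField.adjoin k (Set.range ρ.character)) G
        (Fin n → IntermediateField.adjoin k (Set.range ρ.character))),
      ∀ g, algebraMap _ L (σ.character g) = ρ.character g := by
  have hk := hv.surjective_asRingHomOver_cyclicRep k
  rw [adjoin_character_eq_eigenField hv.ne_zero hk hL]
  let E := (Module.finBasis (eigenField k ρ v) (cyclicForm k ρ v)).equivFun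
  refine ⟨_, (RingEquiv.toMonoidHom E.conjRingEquiv).comp (cyclicRep k ρ v), fun g => ?_⟩
  rw [← algebraMap_character_cyclicRep hv.ne_zero hk hL]
  exact congrArg _ (LinearMap.trace_conj' (cyclicRep k ρ v g) E)

theorem IsCornerEigenvector.prime_algebraMap_adjoin [IsDiscreteValuationRing O]
    (hv : IsCornerEigenvector e ρ v) (hL : Function.Surjective (asRingHomOver L ρ))
    (hG : IsUnit (Nat.card G : O)) (he : IsPrimitiveIdempotent e)
    (hprim : IsPrimitiveIdempotent (reduction O G e)) {ϖ : O} (hϖ : Irreducible ϖ) :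
    Prime (algebraMap O
      (integralClosure O (IntermediateField.adjoin k (Set.range ρ.character))) ϖ) := by
  have hk := hv.surjective_asRingHomOver_cyclicRep k
  rw [adjoin_character_eq_eigenField hv.ne_zero hk hL]
  have : FaithfulSMul O (eigenField k ρ v) := FaithfulSMul.trans O k _
  exact (hv.cyclicVector k).prime_algebraMap exists_asRingHomOver_cyclicVector_eq hG he hprim hϖ

end DescentOfCornerEigenvector

section NormOne

variable {K G V : Type*} [Field K] [Group G] [AddCommGroup V] [Module K V]
  {ρ : Representation K G V}

section SumOverGroup

variable [CharZero K] [Fintype G]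

theorem nontrivial_of_sum_character_mul_eq_card
    (hρ : ∑ g, ρ.character g * ρ.character g⁻¹ = Nat.card G) : Nontrivial V := by
  by_contra hV
  rw [not_nontrivial_iff_subsingleton] at hV
  have hchar (g : G) : ρ.character g = 0 := by
    rw [Representation.character, Subsingleton.elim (ρ g) 0, map_zero]
  simp only [hchar, mul_zero, Finset.sum_const_zero] at hρ
  exact NeZero.ne (Nat.card G : K) hρ.symm

variable [FiniteDimensional K V]

theorem exists_eq_smul_of_sum_character_mul_eq_card
    (hρ : ∑ g, ρ.character g * ρ.character g⁻¹ = Nat.card G) {f : Module.End K V}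
    (hf : ∀ g w, f (ρ g w) = ρ g (f w)) : ∃ t : K, ∀ w, f w = t • w := by
  have := invertibleOfNonzero (NeZero.ne (Nat.card G : K))
  have hfinrank : Module.finrank K (Representation.IntertwiningMap ρ ρ) = 1 := by
    have h := Representation.card_inv_mul_sum_char_mul_char_eq_finrank ρ ρ
    rw [hρ, inv_mul_cancel₀ (NeZero.ne _)] at h
    exact_mod_cast h.symm
  have hid : Representation.IntertwiningMap.id ρ ≠ 0 := by
    intro h
    have := nontrivial_of_sum_character_mul_eq_card hρ
    obtain ⟨w, hw⟩ := exists_ne (0 : V)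
    exact hw (congrArg (fun f => f.toLinearMap w) h)
  obtain ⟨t, ht⟩ := (finrank_eq_one_iff_of_nonzero' _ hid).1 hfinrank
    (f.intertwiningMap_of_isIntertwiningMap ρ ρ hf)
  exact ⟨t, fun w => (congrArg (fun f => f.toLinearMap w) ht).symm⟩

theorem surjective_asRingHomOver_of_sum_character_mul_eq_card
    (hρ : ∑ g, ρ.character g * ρ.character g⁻¹ = Nat.card G) :
    Function.Surjective (asRingHomOver K ρ) := by
  refine surjective_asRingHomOver_of_forall_commute K fun φ hφ => ?_
  have map_smul (c : K) (w : V) : φ (c • w) = c • φ w := by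
    simpa [asRingHomOver_single] using hφ (MonoidAlgebra.single 1 c) w
  have map_apply (g : G) (w : V) : φ (ρ g w) = ρ g (φ w) := by
    simpa [asRingHomOver_single] using hφ (MonoidAlgebra.single g 1) w
  exact exists_eq_smul_of_sum_character_mul_eq_card hρ
    (f := { φ with map_smul' := map_smul }) map_apply

end SumOverGroup

section ScalarsOverSubfield

theorem exists_sum_conj_eq_smul_one [Fintype G] (hρ : Function.Surjective (asRingHomOver K ρ))
    (g : G) : ∃ c : K, ∑ h : G, ρ (h * g * h⁻¹) = c • 1 := by
  let z : Module.End K V := ∑ h : G, ρ (h * g * h⁻¹)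
  have z_commute_apply (a : G) : z * ρ a = ρ a * z := by
    rw [Finset.sum_mul, Finset.mul_sum]
    refine Fintype.sum_equiv (Equiv.mulLeft a⁻¹) _ _ fun h => ?_
    rw [← map_mul, ← map_mul]
    simp [mul_assoc]
  have z_mem_center : z ∈ Subalgebra.center K (Module.End K V) := by
    refine Subalgebra.mem_center_iff.2 fun f => ?_
    obtain ⟨x, rfl⟩ := hρ f
    induction x using MonoidAlgebra.induction_linear with
    | zero => simp
    | add x y hx hy => rw [map_add, add_mul, mul_add, hx, hy]
    | single a c =>
      rw [asRingHomOver_single, smul_mul_assoc, mul_smul_comm, z_commute_apply]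
  rw [Algebra.IsCentral.center_eq_bot] at z_mem_center
  obtain ⟨c, hc⟩ := Algebra.mem_bot.1 z_mem_center
  exact ⟨c, by rw [← Algebra.algebraMap_eq_smul_one, hc]⟩

variable {k : Type*} [Field k] [Algebra k K] [Finite G]

theorem exists_asRingHomOver_eq_inv_smul_one [Nontrivial V] {a : K} {x : k[G]}
    (hx : asRingHomOver k ρ x = a • 1) : ∃ y : k[G], asRingHomOver k ρ y = a⁻¹ • 1 := by
  have hxw (w : V) : asRingHomOver k ρ x w = a • w := by rw [hx]; rfl
  obtain ⟨v, hv⟩ := exists_ne (0 : V)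
  have ha_mem := (isIntegral_of_asRingHomOver_apply_eq_smul hv (hxw v)).inv_mem_adjoin
  rw [Algebra.adjoin_singleton_eq_range_aeval] at ha_mem
  obtain ⟨P, hP⟩ := ha_mem
  exact ⟨Polynomial.aeval x P, LinearMap.ext fun w =>
    (asRingHomOver_aeval_apply (hxw w) P).trans (congrArg (· • w) hP)⟩

variable [FiniteDimensional K V]

/-- The class sum of `g` acts as a scalar, which is a multiple of `ρ.character g` by a trace
computation. -/
theorem exists_asRingHomOver_eq_character_smul_one [NeZero (Nat.card G : k)]
    (hρ : Function.Surjective (asRingHomOver K ρ)) (g : G) :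
    ∃ x : k[G], asRingHomOver k ρ x = ρ.character g • (1 : Module.End K V) := by
  have := Fintype.ofFinite G
  obtain ⟨c, hc⟩ := exists_sum_conj_eq_smul_one hρ g
  have htrace : c * Module.finrank K V = Nat.card G * ρ.character g := by
    have h := congrArg (LinearMap.trace K V) hc.symm
    rw [map_smul, LinearMap.trace_one, smul_eq_mul, map_sum] at h
    have hconj (h : G) : LinearMap.trace K V (ρ (h * g * h⁻¹)) = ρ.character g :=
      ρ.char_conj g h
    simpa only [hconj, Finset.sum_const, Finset.card_univ, nsmul_eq_mul,
      Fintype.card_eq_nat_card] using h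
  have hG : (Nat.card G : K) ≠ 0 := by
    rw [← map_natCast (algebraMap k K)]
    exact (map_ne_zero _).2 (NeZero.ne _)
  have hsum : asRingHomOver k ρ (∑ h : G, MonoidAlgebra.single (h * g * h⁻¹) 1) = c • 1 := by
    simp only [map_sum, asRingHomOver_single, map_one, one_smul, hc]
  refine ⟨((Module.finrank K V : k) / Nat.card G) •
    ∑ h : G, MonoidAlgebra.single (h * g * h⁻¹) 1, ?_⟩
  rw [asRingHomOver_smul, hsum, smul_smul, map_div₀, map_natCast, map_natCast]
  congr 1
  field_simp
  linear_combination htrace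

variable [Nontrivial V]

theorem exists_asRingHomOver_eq_smul_one [NeZero (Nat.card G : k)]
    (hρ : Function.Surjective (asRingHomOver K ρ)) {a : K}
    (ha : a ∈ IntermediateField.adjoin k (Set.range ρ.character)) :
    ∃ x : k[G], asRingHomOver k ρ x = a • (1 : Module.End K V) := by
  induction ha using IntermediateField.adjoin_induction with
  | mem a ha =>
    obtain ⟨g, rfl⟩ := ha
    exact exists_asRingHomOver_eq_character_smul_one hρ g
  | algebraMap c => exact ⟨c • 1, by rw [asRingHomOver_smul, map_one]⟩
  | add a b _ _ ha hb =>
    obtain ⟨⟨x, hx⟩, y, hy⟩ := And.intro ha hb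
    exact ⟨x + y, by rw [map_add, hx, hy, add_smul]⟩
  | inv a _ ha =>
    obtain ⟨x, hx⟩ := ha
    exact exists_asRingHomOver_eq_inv_smul_one hx
  | mul a b _ _ ha hb =>
    obtain ⟨⟨x, hx⟩, y, hy⟩ := And.intro ha hb
    exact ⟨x * y, by rw [map_mul, hx, hy, smul_mul_smul_comm, one_mul]⟩

theorem surjective_asRingHomOver_of_adjoin_character_eq_top [NeZero (Nat.card G : k)]
    (hρ : Function.Surjective (asRingHomOver K ρ))
    (htop : IntermediateField.adjoin k (Set.range ρ.character) = ⊤) :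
    Function.Surjective (asRingHomOver k ρ) := by
  intro f
  obtain ⟨x, rfl⟩ := hρ f
  induction x using MonoidAlgebra.induction_linear with
  | zero => exact ⟨0, by simp⟩
  | add x y hx hy =>
    obtain ⟨⟨x', hx'⟩, y', hy'⟩ := And.intro hx hy
    exact ⟨x' + y', by rw [map_add, map_add, hx', hy']⟩
  | single g c =>
    obtain ⟨x, hx⟩ := exists_asRingHomOver_eq_smul_one (k := k) hρ (a := c) (htop ▸ trivial)
    exact ⟨x * MonoidAlgebra.single g 1, by
      rw [map_mul, hx, asRingHomOver_single, asRingHomOver_single, map_one, one_smul,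
        smul_mul_assoc, one_mul, Algebra.algebraMap_self, RingHom.id_apply]⟩

end ScalarsOverSubfield

end NormOne

section SimpleConstituent

universe u

theorem exists_isSimpleModule_smul_ne_zero {R : Type*} [Ring R] [IsSemisimpleRing R] {x : R}
    (hx : x ≠ 0) : ∃ N : Submodule R R, IsSimpleModule R N ∧ ∃ n : N, x • n ≠ 0 := by
  by_contra! hcon
  have h1 : (1 : R) ∈ sSup {N : Submodule R R | IsSimpleModule R N} := by
    rw [IsSemisimpleModule.sSup_simples_eq_top]
    trivial
  rw [sSup_eq_iSup'] at h1
  have hx1 : x * 1 = 0 := by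
    refine Submodule.iSup_induction _ (motive := fun y => x * y = 0) h1 ?_ (mul_zero x) ?_
    · rintro ⟨N, hN⟩ y hy
      exact congrArg Subtype.val (hcon N hN ⟨y, hy⟩)
    · intro y z hy hz
      rw [mul_add, hy, hz, add_zero]
  exact hx (by simpa using hx1)

variable {k G N : Type*} [Field k] [Group G] [AddCommGroup N] [Module k N] [Module k[G] N]
  [IsScalarTower k k[G] N]

theorem asAlgebraHom_ofModule' (x : k[G]) (n : N) :
    (Representation.ofModule' (k := k) (G := G) N).asAlgebraHom x n = x • n :=
  congrArg (fun f : k[G] →ₐ[k] Module.End k N => f x n)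
    ((MonoidAlgebra.lift k (Module.End k N) G).apply_symm_apply (Algebra.lsmul k k N))

theorem isIrreducible_ofModule' [IsSimpleModule k[G] N] :
    (Representation.ofModule' (k := k) (G := G) N).IsIrreducible := by
  let σ := Representation.ofModule' (k := k) (G := G) N
  let E : σ.asModule ≃ₗ[k[G]] N :=
    { σ.asModuleEquiv with
      map_smul' := fun x n => (σ.asModuleEquiv_map_smul x n).trans (asAlgebraHom_ofModule' x _) }
  rw [Representation.irreducible_iff_isSimpleModule_asModule]
  exact IsSimpleModule.congr E

open CategoryTheory in
theorem exists_simple_asRingHomOver_ne_zero {R : Type*} {k G : Type u} [CommRing R] [Field k]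
    [CharZero k] [IsAlgClosed k] [Algebra R k] [FaithfulSMul R k] [Group G] [Finite G] {x : R[G]}
    (hx : x ≠ 0) : ∃ V : FDRep k G, Simple V ∧ asRingHomOver R V.ρ x ≠ 0 := by
  have := Fintype.ofFinite G
  have hne : MonoidAlgebra.mapRingHom G (algebraMap R k) x ≠ 0 :=
    (map_ne_zero_iff _ (MonoidAlgebra.map_injective _
      (FaithfulSMul.algebraMap_injective R k))).2 hx
  obtain ⟨N, hN, n, hn⟩ := exists_isSimpleModule_smul_ne_zero hne
  have : Module.Finite k N := Module.Finite.trans k[G] N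
  let σ := Representation.ofModule' (k := k) (G := G) N
  have hσ : σ.IsIrreducible := isIrreducible_ofModule'
  refine ⟨FDRep.of σ, ?_, fun h => hn ?_⟩
  · have := invertibleOfNonzero (NeZero.ne (Nat.card G : k))
    have hnorm := Representation.char_orthonormal σ σ
    rw [if_pos ⟨Representation.Equiv.refl σ⟩, inv_mul_eq_one₀ (NeZero.ne _)] at hnorm
    exact (FDRep.simple_iff_char_is_norm_one _).2 hnorm.symm
  · rw [← asAlgebraHom_ofModule' (k := k)]
    exact LinearMap.congr_fun h n

end SimpleConstituent

section CharacterOverSubfield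

variable {K L G V W : Type*} [Field K] [Field L] [Algebra K L] [Group G] [AddCommGroup V]
  [Module L V] {ρ : Representation L G V} [AddCommGroup W]

theorem asRingHomOver_ne_zero_of_algebraMap_character_eq {R : Type*} [CommRing R] [Algebra R K]
    [Algebra R L] [IsScalarTower R K L] [CharZero L] [FiniteDimensional L V] [Module K W]
    {σ : Representation K G W} (hσ : ∀ g, algebraMap K L (σ.character g) = ρ.character g)
    {e : R[G]} (he : IsIdempotentElem e) (hne : asRingHomOver R ρ e ≠ 0) :
    asRingHomOver R σ e ≠ 0 := by
  intro h
  have htrace := algebraMap_trace_asRingHomOver hσ e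
  rw [h, map_zero, map_zero] at htrace
  exact hne (LinearMap.IsIdempotentElem.eq_zero_of_trace_eq_zero
    (he.map (asRingHomOver R ρ)) htrace.symm)

theorem adjoin_character_eq_top_of_algebraMap_character_eq
    [Module (IntermediateField.adjoin K (Set.range ρ.character)) W]
    {σ : Representation (IntermediateField.adjoin K (Set.range ρ.character)) G W}
    (hσ : ∀ g, algebraMap _ L (σ.character g) = ρ.character g) :
    IntermediateField.adjoin K (Set.range σ.character) = ⊤ := by
  apply IntermediateField.map_injective (IntermediateField.val _)
  rw [IntermediateField.adjoin_map, ← Set.range_comp, ← AlgHom.fieldRange_eq_map,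
    IntermediateField.fieldRange_val]
  exact congrArg _ (congrArg Set.range (funext hσ))

theorem sum_character_mul_eq_card_of_algebraMap_character_eq [Fintype G] [Module K W]
    {σ : Representation K G W} (hσ : ∀ g, algebraMap K L (σ.character g) = ρ.character g)
    (hρ : ∑ g, ρ.character g * ρ.character g⁻¹ = Nat.card G) :
    ∑ g, σ.character g * σ.character g⁻¹ = Nat.card G := by
  apply (algebraMap K L).injective
  simp only [map_sum, map_mul, hσ, hρ, map_natCast]

end CharacterOverSubfield

section SemiperfectGroupRing

universe u

variable {O k : Type*} {L G : Type u} [CommRing O] [IsDomain O] [IsDiscreteValuationRing O]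
  [Field k] [CharZero k] [Algebra O k] [IsFractionRing O k] [Field L] [Algebra O L] [Algebra k L]
  [IsScalarTower O k L] [Group G] [Finite G] {ϖ : O}

theorem exists_isCornerEigenvector_of_forall_reduction [Finite (IsLocalRing.ResidueField O)]
    [IsAlgClosed L] (hG : IsUnit (Nat.card G : O))
    (hprim : ∀ e : O[G], IsPrimitiveIdempotent e → IsPrimitiveIdempotent (reduction O G e))
    {V : Type*} [AddCommGroup V] [Module L V] [FiniteDimensional L V] [Nontrivial V]
    (ρ : Representation L G V) :
    ∃ e : O[G], IsPrimitiveIdempotent e ∧ ∃ v, IsCornerEigenvector e ρ v := by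
  have : IsNoetherianRing O[G] := IsNoetherianRing.of_finite O O[G]
  have h1 : (1 : O[G]) ∉ (asRingHomOver O ρ).toAddMonoidHom.ker := fun h =>
    one_ne_zero ((map_one (asRingHomOver O ρ)).symm.trans h)
  obtain ⟨e, -, he, hne⟩ := exists_isPrimitiveIdempotent_notMem _ IsIdempotentElem.one h1
  exact ⟨e, he,
    exists_isCornerEigenvector_of_isAlgClosed hG he.isIdempotentElem (hprim e he) hne⟩

theorem IsPrimitiveIdempotent.reduction_of_algebraMap_character_eq [CharZero L] [Fintype G]
    (hG : IsUnit (Nat.card G : O)) {e : O[G]} (he : IsPrimitiveIdempotent e)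
    {V W : Type*} [AddCommGroup V] [Module L V] [FiniteDimensional L V]
    {ρ : Representation L G V} (hρ : ∑ g, ρ.character g * ρ.character g⁻¹ = Nat.card G)
    (hne : asRingHomOver O ρ e ≠ 0) [AddCommGroup W]
    [Module (IntermediateField.adjoin k (Set.range ρ.character)) W]
    [FiniteDimensional (IntermediateField.adjoin k (Set.range ρ.character)) W]
    {σ : Representation (IntermediateField.adjoin k (Set.range ρ.character)) G W}
    (hσ : ∀ g, algebraMap _ L (σ.character g) = ρ.character g) (hϖ : Irreducible ϖ)
    (hprime : Prime (algebraMap O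
      (integralClosure O (IntermediateField.adjoin k (Set.range ρ.character))) ϖ)) :
    IsPrimitiveIdempotent (reduction O G e) := by
  let F := IntermediateField.adjoin k (Set.range ρ.character)
  have : IsScalarTower O F L := IsScalarTower.to₁₃₄ O k F L
  have : FaithfulSMul O F := FaithfulSMul.trans O k F
  have hnorm := sum_character_mul_eq_card_of_algebraMap_character_eq hσ hρ
  have := nontrivial_of_sum_character_mul_eq_card hnorm
  have hsurj := surjective_asRingHomOver_of_adjoin_character_eq_top (k := k)
    (surjective_asRingHomOver_of_sum_character_mul_eq_card hnorm)
    (adjoin_character_eq_top_of_algebraMap_character_eq hσ)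
  obtain ⟨v, hv⟩ := he.exists_isCornerEigenvector hG hsurj
    (asRingHomOver_ne_zero_of_algebraMap_character_eq hσ he.isIdempotentElem hne)
  exact he.reduction_of_prime hG hv hϖ hprime

variable [IsAlgClosed L] [Finite (IsLocalRing.ResidueField O)]

open CategoryTheory in
theorem isSemiperfectRing_monoidAlgebra_iff (hG : IsUnit (Nat.card G : O)) (hϖ : Irreducible ϖ) :
    IsSemiperfectRing O[G] ↔ ∀ V : FDRep L G, Simple V →
      (∃ (n : ℕ) (σ : Representation (IntermediateField.adjoin k (Set.range V.character)) G
          (Fin n → IntermediateField.adjoin k (Set.range V.character))),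
        ∀ g, algebraMap _ L (σ.character g) = V.character g) ∧
      Prime (algebraMap O
        (integralClosure O (IntermediateField.adjoin k (Set.range V.character))) ϖ) := by
  have := Fintype.ofFinite G
  have := isSemisimpleRing_residueField_monoidAlgebra hG
  have : IsNoetherianRing O[G] := IsNoetherianRing.of_finite O O[G]
  have : CharZero L := charZero_of_injective_algebraMap (algebraMap k L).injective
  rw [isSemiperfectRing_iff_forall_isPrimitiveIdempotent_map reduction_surjective]
  refine ⟨fun hprim V hV => ?_, fun h e he => ?_⟩
  · have hnorm := (FDRep.simple_iff_char_is_norm_one V).1 hV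
    have hL := surjective_asRingHomOver_of_sum_character_mul_eq_card (ρ := V.ρ) hnorm
    have := nontrivial_of_sum_character_mul_eq_card (ρ := V.ρ) hnorm
    obtain ⟨e, he, v, hv⟩ := exists_isCornerEigenvector_of_forall_reduction hG hprim V.ρ
    exact ⟨hv.exists_algebraMap_character_eq k hL,
      hv.prime_algebraMap_adjoin k hL hG he (hprim e he) hϖ⟩
  · have : FaithfulSMul O L := FaithfulSMul.trans O k L
    obtain ⟨V, hV, hne⟩ := exists_simple_asRingHomOver_ne_zero (k := L) he.ne_zero
    have hV_char : V.character = Representation.character V.ρ := rfl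
    obtain ⟨⟨n, σ, hσ⟩, hprime⟩ := hV_char ▸ h V hV
    exact he.reduction_of_algebraMap_character_eq hG
      ((FDRep.simple_iff_char_is_norm_one V).1 hV) hne hσ hϖ hprime

end SemiperfectGroupRing

section LocalizationOfPrimes

theorem prime_map_iff_of_forall_dvd {A B : Type*} [CommRing A] [CommRing B] {f : A →+* B} {π : A}
    (hf : Function.Injective f) (hdvd : ∀ a, f π ∣ f a → π ∣ a)
    (hmul : ∀ b, ∃ u a, IsUnit u ∧ u * b = f a) : Prime (f π) ↔ Prime π := by
  have dvd_iff (a : A) : f π ∣ f a ↔ π ∣ a := ⟨hdvd a, map_dvd f⟩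
  refine and_congr (map_ne_zero_iff f hf) (and_congr (not_congr ?_) ⟨fun h a b hab => ?_, ?_⟩)
  · rw [isUnit_iff_dvd_one, isUnit_iff_dvd_one, ← dvd_iff, map_one]
  · simpa only [dvd_iff] using h (f a) (f b) (by rwa [← map_mul, dvd_iff])
  · intro h b c hbc
    obtain ⟨u, a, hu, ha⟩ := hmul b
    obtain ⟨w, d, hw, hd⟩ := hmul c
    rw [← hu.dvd_mul_left, ← hw.dvd_mul_left (b := c), ha, hd, dvd_iff, dvd_iff]
    refine h a d ?_
    rw [← dvd_iff, map_mul, ← ha, ← hd, mul_mul_mul_comm]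
    exact hbc.mul_left _

variable {R Rₘ A K : Type*} [CommRing R] [CommRing Rₘ] [CommRing A] [CommRing K] [Algebra R Rₘ]
  [Algebra R A] [Algebra R K] [Algebra Rₘ K] [Algebra A K] [IsScalarTower R Rₘ K]
  [IsScalarTower R A K]

theorem prime_algebraMap_integralClosure_localization_iff (M : Submonoid R) [IsLocalization M Rₘ]
    [IsIntegralClosure A R K] {π : R} (hM : ∀ m ∈ M, IsCoprime m π) :
    Prime (algebraMap Rₘ (integralClosure Rₘ K) (algebraMap R Rₘ π)) ↔
      Prime (algebraMap R A π) := by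
  have algebraMap_injective := IsIntegralClosure.algebraMap_injective A R K
  let f : A →+* integralClosure Rₘ K := (algebraMap A K).codRestrict
    (integralClosure Rₘ K).toSubring
    fun a => (IsIntegralClosure.isIntegral_iff.2 ⟨a, rfl⟩ : IsIntegral R _).tower_top
  have f_algebraMap (r : R) : f (algebraMap R A r) =
      algebraMap Rₘ (integralClosure Rₘ K) (algebraMap R Rₘ r) := by
    apply Subtype.ext
    change algebraMap A K (algebraMap R A r) = algebraMap Rₘ K (algebraMap R Rₘ r)
    rw [← IsScalarTower.algebraMap_apply, ← IsScalarTower.algebraMap_apply]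
  have hf : Function.Injective f := fun a b h => algebraMap_injective (congrArg Subtype.val h)
  have hmul (b : integralClosure Rₘ K) : ∃ m ∈ M, ∃ a, f (algebraMap R A m) * b = f a := by
    obtain ⟨m, hm⟩ := b.2.exists_multiple_integral_of_isLocalization M _
    obtain ⟨a, ha⟩ := IsIntegralClosure.isIntegral_iff (A := A) |>.1 hm
    refine ⟨m, m.2, a, Subtype.ext ?_⟩
    change algebraMap A K (algebraMap R A m) * b = algebraMap A K a
    rw [ha, ← IsScalarTower.algebraMap_apply, Submonoid.smul_def, Algebra.smul_def]
  rw [← f_algebraMap]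
  refine prime_map_iff_of_forall_dvd hf ?_ fun b => ?_
  · rintro a ⟨b, hb⟩
    obtain ⟨m, hm, c, hc⟩ := hmul b
    have hdvd : algebraMap R A π ∣ algebraMap R A m * a :=
      ⟨c, hf (by rw [map_mul, map_mul, hb, ← hc, mul_left_comm])⟩
    exact ((hM m hm).symm.map (algebraMap R A)).dvd_of_dvd_mul_left hdvd
  · obtain ⟨m, hm, a, ha⟩ := hmul b
    refine ⟨_, a, ?_, ha⟩
    rw [f_algebraMap]
    exact (IsLocalization.map_units Rₘ ⟨m, hm⟩).map (algebraMap Rₘ (integralClosure Rₘ K))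

end LocalizationOfPrimes

theorem schurIndex_eq_one_iff {G : Type} [Group G] {χ : G → ℂ} :
    schurIndex χ = 1 ↔
      ∃ (n : ℕ) (σ : Representation (charField χ) G (Fin n → charField χ)),
        ∀ g, algebraMap (charField χ) ℂ (σ.character g) = χ g := by
  constructor
  · intro h
    obtain ⟨-, n, σ, hσ⟩ := Nat.sInf_mem (Nat.nonempty_of_sInf_eq_succ h)
    refine ⟨n, σ, fun g => (hσ g).trans ?_⟩
    change (schurIndex χ : ℂ) * χ g = χ g
    rw [h, Nat.cast_one, one_mul]
  · rintro ⟨n, σ, hσ⟩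
    have one_mem : 1 ∈ {m : ℕ | 0 < m ∧
        ∃ (n : ℕ) (ρ : Representation (charField χ) G (Fin n → charField χ)),
          ∀ g, algebraMap (charField χ) ℂ (LinearMap.trace _ _ (ρ g)) = (m : ℂ) * χ g} :=
      ⟨one_pos, n, σ, fun g => by rw [Nat.cast_one, one_mul]; exact hσ g⟩
    exact (Nat.sInf_le one_mem).antisymm (Nat.sInf_mem ⟨1, one_mem⟩).1

namespace ZLoc

variable (p : ℕ) [hp : Fact p.Prime]

theorem primeCompl_le_nonZeroDivisors : (Ideal.span {(p : ℤ)}).primeCompl ≤ nonZeroDivisors ℤ :=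
  Ideal.primeCompl_le_nonZeroDivisors _

instance isDomain : IsDomain (ZLoc p) :=
  IsLocalization.isDomain_localization (primeCompl_le_nonZeroDivisors p)

instance isDiscreteValuationRing : IsDiscreteValuationRing (ZLoc p) :=
  IsLocalization.AtPrime.isDiscreteValuationRing_of_dedekind_domain ℤ
    (Ideal.span_singleton_eq_bot.not.2 (Nat.cast_ne_zero.2 hp.out.ne_zero)) (ZLoc p)

noncomputable instance algebraRat : Algebra (ZLoc p) ℚ :=
  IsLocalization.localizationAlgebraOfSubmonoidLe (ZLoc p) ℚ _ _ (primeCompl_le_nonZeroDivisors p)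

/-- The `ℤ`-actions are those of the `ℤ`-algebra structures: the one of `ZLoc p` comes from the
localization and does not unfold to the integer multiples of the additive group, which instance
search would choose. -/
instance isScalarTower_int (K : Type*) [CommRing K] [Algebra (ZLoc p) K] :
    @IsScalarTower ℤ (ZLoc p) K Algebra.toSMul Algebra.toSMul Algebra.toSMul :=
  IsScalarTower.of_algebraMap_eq fun n => by
    rw [algebraMap_int_eq, eq_intCast, eq_intCast, map_intCast]

instance isFractionRing_rat : IsFractionRing (ZLoc p) ℚ :=
  IsFractionRing.isFractionRing_of_isDomain_of_isLocalization
    (Ideal.span {(p : ℤ)}).primeCompl (ZLoc p) ℚ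

noncomputable instance algebraComplex : Algebra (ZLoc p) ℂ :=
  ((algebraMap ℚ ℂ).comp (algebraMap (ZLoc p) ℚ)).toAlgebra

instance isScalarTower_rat_complex : IsScalarTower (ZLoc p) ℚ ℂ :=
  IsScalarTower.of_algebraMap_eq' rfl

instance finite_residueField : Finite (IsLocalRing.ResidueField (ZLoc p)) := by
  have : NeZero p := ⟨hp.out.ne_zero⟩
  have : Finite (ℤ ⧸ Ideal.span {(p : ℤ)}) :=
    Finite.of_equiv _ (Int.quotientSpanNatEquivZMod p).symm.toEquiv
  exact Finite.of_equiv _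
    (IsLocalization.AtPrime.equivQuotMaximalIdeal (Ideal.span {(p : ℤ)}) (ZLoc p)).toEquiv

theorem irreducible_natCast : Irreducible (p : ZLoc p) := by
  rw [IsDiscreteValuationRing.irreducible_iff_uniformizer,
    ← Localization.AtPrime.map_eq_maximalIdeal, Ideal.map_span, Set.image_singleton, map_natCast]

variable {p}

theorem isUnit_natCast_of_not_dvd {n : ℕ} (hn : ¬ p ∣ n) : IsUnit (n : ZLoc p) := by
  have hmem : (n : ℤ) ∈ (Ideal.span {(p : ℤ)}).primeCompl := fun h =>
    hn (Int.natCast_dvd_natCast.1 (Ideal.mem_span_singleton.1 h))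
  simpa only [map_natCast] using IsLocalization.map_units (ZLoc p) ⟨_, hmem⟩

theorem prime_natCast_integralClosure_iff {K : Type*} [Field K] [Algebra (ZLoc p) K] :
    Prime (algebraMap (ZLoc p) (integralClosure (ZLoc p) K) p) ↔
      Prime (p : NumberField.RingOfIntegers K) := by
  have isCoprime (m : ℤ) (hm : m ∈ (Ideal.span {(p : ℤ)}).primeCompl) : IsCoprime m p :=
    ((Nat.prime_iff_prime_int.1 hp.out).coprime_iff_not_dvd.2 fun h =>
      hm (Ideal.mem_span_singleton.2 h)).symm
  simpa only [map_natCast] using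
    prime_algebraMap_integralClosure_localization_iff (A := NumberField.RingOfIntegers K) (K := K)
      (Rₘ := ZLoc p) _ isCoprime

end ZLoc

open CategoryTheory in
/-- **Main Theorem.** Suppose the prime `p` does not divide `|G|`. Then `ℤ_(p)G` is
semiperfect if and only if (i) every complex irreducible character `χ` of `G` has Schur
index `1`, and (ii) `p` is inert in the field of character values `ℚ(χ)` of every complex
irreducible character `χ`, i.e. `p` remains a prime element of the ring of integers of
`ℚ(χ)`. -/
theorem isSemiperfectRing_zloc_monoidAlgebra_iff_schurIndex_and_inert
    (G : Type) [Group G] [Fintype G] (p : ℕ) [Fact p.Prime]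
    (hpG : ¬ p ∣ Fintype.card G) :
    IsSemiperfectRing (MonoidAlgebra (ZLoc p) G) ↔
      ∀ V : FDRep ℂ G, Simple V →
        schurIndex V.character = 1 ∧
        Prime (p : NumberField.RingOfIntegers (charField V.character)) := by
  have hG : IsUnit (Nat.card G : ZLoc p) := by
    rw [Nat.card_eq_fintype_card]
    exact ZLoc.isUnit_natCast_of_not_dvd hpG
  rw [isSemiperfectRing_monoidAlgebra_iff (k := ℚ) (L := ℂ) hG (ZLoc.irreducible_natCast p)]
  exact forall₂_congr fun V _ =>
    and_congr schurIndex_eq_one_iff.symm ZLoc.prime_natCast_integralClosure_iff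
end

section
/- Let p be a prime with p ≠ 3 and let C₃ be the cyclic group of order 3. Then ℤ_(p)C₃ is semiperfect if and only if p ≡ 2 (mod 3). In particular, if p ≡ 1 (mod 3) then ℤ_(p)C₃ is not semiperfect, so the Krull–Schmidt theorem fails for projective ℤ_(p)C₃-modules. -/
/-!
Let `A` be a local ring with residue field `k` and let `G` be a finite group of order invertible
in `A`. By Nakayama's lemma the kernel of `A[G] → k[G]` lies in the Jacobson radical, and by
Maschke's theorem `k[G]` is semisimple, so the kernel is the radical and `A[G]` is semiperfect if
and only if idempotents lift along `A[G] → k[G]`.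

For `G = C₃`, an idempotent `a + bg + cg²` with `b - c` invertible produces a root of `X² + X + 1`
in the coefficient ring. If `k` contains no such root, then every idempotent of `k[C₃]` has `b = c`
and is one of `0`, `1`, `e`, `1 - e` with `e = (1 + g + g²) / 3`, all of which lift. If `k` contains
a root `w`, then a lift of the idempotent `(1 + w²g + wg²) / 3` forces a root in `A`. A finite field
whose order `q` is prime to `3` contains a root if and only if `q ≡ 1 (mod 3)`, while `ℤ_(p) ⊆ ℚ`
contains none.
-/

open scoped MonoidAlgebra

section Jacobson

theorem mem_ringJacobson_iff {R : Type*} [Ring R] {x : R} :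
    x ∈ ringJacobson R ↔ x ∈ Ring.jacobson R := by
  rw [← Ideal.jacobson_bot, ringJacobson, TwoSidedIdeal.mem_jacobson_iff, Ideal.mem_jacobson_iff]
  rfl

theorem ker_eq_jacobson_of_isSemisimpleRing {R S : Type*} [Ring R] [Ring S] [IsSemisimpleRing S]
    {f : R →+* S} (hf : Function.Surjective f) (hker : RingHom.ker f ≤ Ring.jacobson R) :
    RingHom.ker f = Ring.jacobson R := by
  have : RingHomSurjective f := ⟨hf⟩
  exact hker.antisymm (IsSemisimpleModule.jacobson_le_ker R S R S f.toSemilinearMap)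

theorem isSemiperfectRing_iff_of_ker_le_jacobson {R S : Type*} [Ring R] [Ring S]
    [IsSemisimpleRing S] {f : R →+* S} (hf : Function.Surjective f)
    (hker : RingHom.ker f ≤ Ring.jacobson R) :
    IsSemiperfectRing R ↔
      ∀ x : S, IsIdempotentElem x → ∃ e : R, IsIdempotentElem e ∧ f e = x := by
  have hcon : (ringJacobson R).ringCon = RingCon.ker f := by
    ext x y
    rw [TwoSidedIdeal.rel_iff, mem_ringJacobson_iff, ← ker_eq_jacobson_of_isSemisimpleRing hf hker,
      RingHom.mem_ker, map_sub, sub_eq_zero, RingCon.ker_apply]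
  rw [IsSemiperfectRing, hcon]
  let φ := RingCon.quotientKerEquivOfSurjective f hf
  constructor
  · rintro ⟨-, hlift⟩ x hx
    obtain ⟨e, he, hex⟩ := hlift (φ.symm x) (hx.map φ.symm)
    exact ⟨e, he, (φ.symm_apply_eq.mp hex.symm).symm⟩
  · refine fun hlift ↦ ⟨φ.symm.isSemisimpleRing, fun x hx ↦ ?_⟩
    obtain ⟨e, he, hex⟩ := hlift (φ x) (hx.map φ)
    exact ⟨e, he, φ.injective hex⟩

theorem jacobson_smul_top_le_jacobson (A B : Type*) [CommRing A] [Ring B] [Algebra A B]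
    [Module.Finite A B] :
    Ring.jacobson A • (⊤ : Submodule A B) ≤ (Ring.jacobson B).restrictScalars A := by
  intro x hx
  rw [Submodule.restrictScalars_mem, ← Ideal.jacobson_bot, Ideal.mem_jacobson_iff]
  intro y
  have mul_mem (b : B) : b * x ∈ Ring.jacobson A • (⊤ : Submodule A B) := by
    have hbx := Submodule.mem_map_of_mem (f := LinearMap.mulLeft A b) hx
    rw [Submodule.map_smul''] at hbx
    exact Submodule.smul_mono le_rfl le_top hbx
  let N : Submodule A B := (Ideal.span {y * x + 1}).restrictScalars A
  have htop : (⊤ : Submodule A B) ≤ N := by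
    refine Submodule.le_of_le_smul_of_le_jacobson_bot Module.Finite.fg_top
      Ideal.jacobson_bot.ge fun b _ ↦ ?_
    have hb : b = b * (y * x + 1) + -(b * y) * x := by noncomm_ring
    rw [hb]
    exact Submodule.add_mem_sup (Ideal.mul_mem_left _ b (Ideal.mem_span_singleton_self _))
      (mul_mem _)
  obtain ⟨z, hz⟩ := Ideal.mem_span_singleton'.mp (htop (Submodule.mem_top (x := (1 : B))))
  exact ⟨z, by rw [Submodule.mem_bot, ← hz]; noncomm_ring⟩

end Jacobson

section MonoidAlgebra

open IsLocalRing MonoidAlgebra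

theorem ker_mapRingHom_le_jacobson {A S G : Type*} [CommRing A] [Ring S] [Monoid G] [Finite G]
    {f : A →+* S} (hf : RingHom.ker f ≤ Ring.jacobson A) :
    RingHom.ker (mapRingHom G f) ≤ Ring.jacobson A[G] := by
  intro x hx
  have hcoeff (g : G) : x.coeff g ∈ Ring.jacobson A := by
    refine hf ?_
    rw [RingHom.mem_ker, ← coeff_mapRingHom, RingHom.mem_ker.mp hx, coeff_zero, Finsupp.zero_apply]
  apply jacobson_smul_top_le_jacobson A
  rw [← sum_coeff_single x, Finsupp.sum]
  refine Submodule.sum_mem _ fun g _ ↦ ?_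
  rw [← mul_one (x.coeff g), ← smul_eq_mul, ← smul_single]
  exact Submodule.smul_mem_smul (hcoeff g) Submodule.mem_top

theorem isSemiperfectRing_monoidAlgebra_iff_s11 {A G : Type*} [CommRing A] [IsLocalRing A] [Group G]
    [Finite G] (hG : IsUnit (Nat.card G : A)) :
    IsSemiperfectRing A[G] ↔
      ∀ x : (ResidueField A)[G], IsIdempotentElem x →
        ∃ e : A[G], IsIdempotentElem e ∧ mapRingHom G (residue A) e = x := by
  have : NeZero (Nat.card G : ResidueField A) := ⟨by simpa using (hG.map (residue A)).ne_zero⟩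
  refine isSemiperfectRing_iff_of_ker_le_jacobson
    (map_surjective (residue A).toAddMonoidHom residue_surjective) (ker_mapRingHom_le_jacobson ?_)
  rw [ker_residue, ringJacobson_eq_maximalIdeal]

end MonoidAlgebra

section CyclicThree

open MonoidAlgebra Multiplicative

/-- The element `a + bg + cg²` of the group ring `R[C₃]`, where `g = ofAdd 1` generates `C₃`. -/
noncomputable def c3Elem {R : Type*} [Semiring R] (a b c : R) : R[Multiplicative (ZMod 3)] :=
  single (ofAdd 0) a + single (ofAdd 1) b + single (ofAdd 2) c

section Semiring

variable {R : Type*} [Semiring R]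

theorem coeff_c3Elem (a b c : R) (i : ZMod 3) :
    (c3Elem a b c).coeff (ofAdd i) = ![a, b, c] i := by
  simp only [c3Elem, coeff_add, coeff_single, Finsupp.add_apply, Finsupp.single_apply,
    ofAdd.injective.eq_iff]
  obtain rfl | rfl | rfl : i = 0 ∨ i = 1 ∨ i = 2 := by revert i; decide
  all_goals simp +decide

theorem exists_eq_c3Elem (x : R[Multiplicative (ZMod 3)]) : ∃ a b c : R, x = c3Elem a b c := by
  refine ⟨x.coeff (ofAdd 0), x.coeff (ofAdd 1), x.coeff (ofAdd 2), ?_⟩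
  ext g
  obtain ⟨i, rfl⟩ := ofAdd.surjective g
  rw [coeff_c3Elem]
  fin_cases i <;> rfl

theorem c3Elem_inj {a b c a' b' c' : R} :
    c3Elem a b c = c3Elem a' b' c' ↔ a = a' ∧ b = b' ∧ c = c' := by
  refine ⟨fun h ↦ ?_, by rintro ⟨rfl, rfl, rfl⟩; rfl⟩
  have hcoeff (i : ZMod 3) : ![a, b, c] i = ![a', b', c'] i := by
    rw [← coeff_c3Elem, h, coeff_c3Elem]
  exact ⟨hcoeff 0, hcoeff 1, hcoeff 2⟩

theorem c3Elem_zero : c3Elem (0 : R) 0 0 = 0 := by simp [c3Elem]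

theorem c3Elem_one : c3Elem (1 : R) 0 0 = 1 := by simp [c3Elem, one_def]

theorem c3Elem_mul (a b c a' b' c' : R) :
    c3Elem a b c * c3Elem a' b' c' =
      c3Elem (a * a' + b * c' + c * b') (a * b' + b * a' + c * c')
        (a * c' + b * b' + c * a') := by
  have h11 : (1 : ZMod 3) + 1 = 2 := by decide
  have h12 : (1 : ZMod 3) + 2 = 0 := by decide
  have h21 : (2 : ZMod 3) + 1 = 0 := by decide
  have h22 : (2 : ZMod 3) + 2 = 1 := by decide
  simp only [c3Elem, mul_add, add_mul, single_mul_single, ← ofAdd_add, h11, h12, h21, h22,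
    add_zero, zero_add, single_add]
  abel

theorem mapRingHom_c3Elem {S : Type*} [Semiring S] (f : R →+* S) (a b c : R) :
    mapRingHom _ f (c3Elem a b c) = c3Elem (f a) (f b) (f c) := by
  simp [c3Elem]

end Semiring

theorem c3Elem_sub {R : Type*} [Ring R] (a b c a' b' c' : R) :
    c3Elem a b c - c3Elem a' b' c' = c3Elem (a - a') (b - b') (c - c') := by
  simp only [c3Elem, single_sub]
  abel

variable {R : Type*} [CommRing R]

theorem isIdempotentElem_c3Elem_iff {a b c : R} :
    IsIdempotentElem (c3Elem a b c) ↔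
      a ^ 2 + 2 * b * c = a ∧ 2 * a * b + c ^ 2 = b ∧ 2 * a * c + b ^ 2 = c := by
  rw [IsIdempotentElem, c3Elem_mul, c3Elem_inj]
  ring_nf

theorem isIdempotentElem_c3Elem_of_pow_three_eq_one {t w : R} (ht : 3 * t = 1) (hw : w ^ 3 = 1) :
    IsIdempotentElem (c3Elem t (t * w ^ 2) (t * w)) := by
  rw [isIdempotentElem_c3Elem_iff]
  refine ⟨?_, ?_, ?_⟩
  · linear_combination 2 * t ^ 2 * hw + t * ht
  · linear_combination t * w ^ 2 * ht
  · linear_combination t ^ 2 * w * hw + t * w * ht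

theorem exists_sq_add_self_add_one_eq_zero_of_isIdempotentElem {a b c : R}
    (he : IsIdempotentElem (c3Elem a b c)) (hbc : IsUnit (b - c)) :
    ∃ w : R, w ^ 2 + w + 1 = 0 := by
  obtain ⟨ha, hb, hc⟩ := isIdempotentElem_c3Elem_iff.mp he
  -- Modulo `1 + g + g²` the idempotent is `u + vg` with `u = a - c` and `v = b - c`; its square is
  -- itself exactly when `u² - v² = u` and `v(2u - v) = v`, and then `3u² - 3u + 1 = 0`.
  have hlin : 2 * a - b - c = 1 := hbc.mul_left_cancel (by linear_combination hb - hc)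
  have hquad : (a - c) ^ 2 - (b - c) ^ 2 = a - c := by linear_combination ha - hc
  exact ⟨3 * (a - c) - 2, by
    linear_combination 3 * (2 * (a - c) - 1 + (b - c)) * hlin - 3 * hquad⟩

theorem c3Elem_eq_of_isIdempotentElem [IsDomain R] {t a b : R} (ht : 3 * t = 1)
    (he : IsIdempotentElem (c3Elem a b b)) :
    c3Elem a b b = 0 ∨ c3Elem a b b = 1 ∨ c3Elem a b b = c3Elem t t t ∨
      c3Elem a b b = 1 - c3Elem t t t := by
  obtain ⟨ha, hb, -⟩ := isIdempotentElem_c3Elem_iff.mp he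
  have hb_factor : b * (b + 2 * a - 1) = 0 := by linear_combination hb
  rw [← c3Elem_zero, ← c3Elem_one, c3Elem_sub]
  simp only [c3Elem_inj]
  obtain rfl | hab := mul_eq_zero.mp hb_factor
  · have ha_factor : a * (a - 1) = 0 := by linear_combination ha
    obtain rfl | ha1 := mul_eq_zero.mp ha_factor
    · simp
    · simp [sub_eq_zero.mp ha1]
  · have ha_factor : (a - t) * (a - (1 - t)) = 0 := by
      linear_combination t ^ 2 * ha + 2 * t ^ 2 * (2 * a - 1 - b) * hab
        - ((a ^ 2 - a) * (3 * t + 1) + t) * ht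
    obtain hat | hat := mul_eq_zero.mp ha_factor
    · have hbt : b = t := by linear_combination hab - 2 * hat - ht
      simp [sub_eq_zero.mp hat, hbt]
    · have hbt : b = -t := by linear_combination hab - 2 * hat + ht
      simp [sub_eq_zero.mp hat, hbt]

end CyclicThree

section LocalRing

open IsLocalRing MonoidAlgebra

variable {A : Type*} [CommRing A] [IsLocalRing A]

theorem exists_sq_add_self_add_one_eq_zero_of_isSemiperfectRing (h3 : IsUnit (3 : A))
    (hA : IsSemiperfectRing A[Multiplicative (ZMod 3)])
    (hk : ∃ w : ResidueField A, w ^ 2 + w + 1 = 0) : ∃ w : A, w ^ 2 + w + 1 = 0 := by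
  obtain ⟨w, hw⟩ := hk
  have hw3 : w ^ 3 = 1 := by linear_combination (w - 1) * hw
  have h3k : (3 : ResidueField A) ≠ 0 := by
    simpa only [map_ofNat] using (h3.map (residue A)).ne_zero
  have ht : (3 : ResidueField A) * 3⁻¹ = 1 := mul_inv_cancel₀ h3k
  obtain ⟨e, he, hew⟩ := (isSemiperfectRing_monoidAlgebra_iff_s11 (by simpa using h3)).mp hA _
    (isIdempotentElem_c3Elem_of_pow_three_eq_one ht hw3)
  obtain ⟨a, b, c, rfl⟩ := exists_eq_c3Elem e
  obtain ⟨-, hb, hc⟩ := c3Elem_inj.mp ((mapRingHom_c3Elem _ a b c).symm.trans hew)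
  have hsq : (3 * residue A (b - c)) ^ 2 = -3 := by
    rw [map_sub, hb, hc]
    linear_combination (w ^ 2 - w) ^ 2 * (3 * 3⁻¹ + 1) * ht + (w ^ 2 - 3 * w + 3) * hw
  have hbc : residue A (b - c) ≠ 0 := fun h0 ↦ h3k (by simpa [h0] using hsq)
  exact exists_sq_add_self_add_one_eq_zero_of_isIdempotentElem he
    ((residue_ne_zero_iff_isUnit _).mp hbc)

theorem isSemiperfectRing_of_forall_sq_add_self_add_one_ne_zero (h3 : IsUnit (3 : A))
    (hk : ∀ w : ResidueField A, w ^ 2 + w + 1 ≠ 0) :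
    IsSemiperfectRing A[Multiplicative (ZMod 3)] := by
  obtain ⟨t, ht⟩ := h3.exists_right_inv
  have htk : 3 * residue A t = 1 := by
    simpa only [map_mul, map_ofNat, map_one] using congrArg (residue A) ht
  have ht_idem : IsIdempotentElem (c3Elem t t t) := by
    simpa using isIdempotentElem_c3Elem_of_pow_three_eq_one ht (one_pow 3)
  refine (isSemiperfectRing_monoidAlgebra_iff_s11 (by simpa using h3)).mpr fun x hx ↦ ?_
  obtain ⟨a, b, c, rfl⟩ := exists_eq_c3Elem x
  obtain rfl : b = c := by
    by_contra hbc
    obtain ⟨w, hw⟩ := exists_sq_add_self_add_one_eq_zero_of_isIdempotentElem hx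
      (sub_ne_zero.mpr hbc).isUnit
    exact hk w hw
  obtain h | h | h | h := c3Elem_eq_of_isIdempotentElem htk hx
  · exact ⟨0, .zero, by rw [h, map_zero]⟩
  · exact ⟨1, .one, by rw [h, map_one]⟩
  · exact ⟨c3Elem t t t, ht_idem, by rw [h, mapRingHom_c3Elem]⟩
  · exact ⟨1 - c3Elem t t t, ht_idem.one_sub, by rw [h, map_sub, map_one, mapRingHom_c3Elem]⟩

end LocalRing

section FiniteField

theorem natCast_ne_zero_of_not_dvd_natCard {R : Type*} [Ring R] [Nontrivial R] {q : ℕ}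
    [Fact q.Prime] (hq : ¬ q ∣ Nat.card R) : (q : R) ≠ 0 := by
  intro h
  have hord : addOrderOf (1 : R) = q := addOrderOf_eq_prime (by simpa using h) one_ne_zero
  exact hq (hord ▸ addOrderOf_dvd_natCard 1)

variable {K : Type*} [Field K]

theorem exists_orderOf_eq_prime_iff_dvd_natCard_sub_one [Finite K] (q : ℕ) [hq : Fact q.Prime] :
    (∃ w : K, orderOf w = q) ↔ q ∣ Nat.card K - 1 := by
  rw [← Nat.card_units]
  constructor
  · rintro ⟨w, rfl⟩
    have hw0 : w ≠ 0 := by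
      rintro rfl
      simpa using hq.out.ne_zero
    rw [← Units.val_mk0 hw0, orderOf_units]
    exact orderOf_dvd_natCard _
  · intro hdvd
    obtain ⟨u, hu⟩ := exists_prime_orderOf_dvd_card' q hdvd
    exact ⟨u, orderOf_units.trans hu⟩

theorem sq_add_self_add_one_eq_zero_iff_orderOf_eq_three (h3 : (3 : K) ≠ 0) {w : K} :
    w ^ 2 + w + 1 = 0 ↔ orderOf w = 3 := by
  have : NeZero ((3 : ℕ) : K) := ⟨by exact_mod_cast h3⟩
  rw [← IsPrimitiveRoot.iff_orderOf, ← Polynomial.isRoot_cyclotomic_iff,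
    Polynomial.cyclotomic_three]
  simp

theorem exists_sq_add_self_add_one_eq_zero_iff_natCard_mod_three (h3 : ¬ 3 ∣ Nat.card K) :
    (∃ w : K, w ^ 2 + w + 1 = 0) ↔ Nat.card K % 3 = 1 := by
  have hcard : Nat.card K ≠ 0 := fun h ↦ h3 (h ▸ dvd_zero 3)
  have : Finite K := Nat.finite_of_card_ne_zero hcard
  have h3K : (3 : K) ≠ 0 := natCast_ne_zero_of_not_dvd_natCard h3
  simp only [sq_add_self_add_one_eq_zero_iff_orderOf_eq_three h3K,
    exists_orderOf_eq_prime_iff_dvd_natCard_sub_one]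
  lia

end FiniteField

theorem sq_add_self_add_one_ne_zero_of_localization_int (P : Ideal ℤ) [P.IsPrime]
    (w : Localization.AtPrime P) : w ^ 2 + w + 1 ≠ 0 := by
  have isUnit_cast (y : P.primeCompl) : IsUnit (Int.castRingHom ℚ y) := by
    have hy : (y : ℤ) ≠ 0 := fun h ↦ y.2 (h ▸ P.zero_mem)
    simpa using hy
  let f : Localization.AtPrime P →+* ℚ := IsLocalization.lift isUnit_cast
  intro hw
  have hfw : f w ^ 2 + f w + 1 = 0 := by simpa using congrArg f hw
  nlinarith [sq_nonneg (2 * f w + 1)]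

theorem natCard_residueField_zloc (p : ℕ) [Fact p.Prime] :
    Nat.card (IsLocalRing.ResidueField (ZLoc p)) = p := by
  have : (Ideal.span {(p : ℤ)}).IsMaximal :=
    (int_span_prime_isPrime p).isMaximal (by simpa using (Fact.out : p.Prime).ne_zero)
  let φ : IsLocalRing.ResidueField (ZLoc p) ≃+* ZMod p :=
    (IsLocalization.AtPrime.equivQuotMaximalIdeal (Ideal.span {(p : ℤ)}) (ZLoc p)).symm.trans
      (Int.quotientSpanNatEquivZMod p)
  rw [Nat.card_congr φ.toEquiv, Nat.card_zmod]

theorem isSemiperfectRing_zloc_C3_iff_general {A : Type*} [CommRing A] [IsLocalRing A]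
    (h3 : ¬ 3 ∣ Nat.card (IsLocalRing.ResidueField A)) (hA : ∀ w : A, w ^ 2 + w + 1 ≠ 0) :
    IsSemiperfectRing A[Multiplicative (ZMod 3)] ↔
      Nat.card (IsLocalRing.ResidueField A) % 3 = 2 := by
  have h3_unit : IsUnit (3 : A) := by
    rw [← IsLocalRing.residue_ne_zero_iff_isUnit, map_ofNat]
    exact natCast_ne_zero_of_not_dvd_natCard h3
  have root_iff := exists_sq_add_self_add_one_eq_zero_iff_natCard_mod_three h3
  constructor
  · intro hsemi
    have hne : Nat.card (IsLocalRing.ResidueField A) % 3 ≠ 1 := fun h1 ↦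
      let ⟨w, hw⟩ :=
        exists_sq_add_self_add_one_eq_zero_of_isSemiperfectRing h3_unit hsemi (root_iff.mpr h1)
      hA w hw
    lia
  · intro h2
    refine isSemiperfectRing_of_forall_sq_add_self_add_one_ne_zero h3_unit fun w hw ↦ ?_
    have h1 := root_iff.mp ⟨w, hw⟩
    lia

/-- Let `p ≠ 3` be a prime and `C₃` the cyclic group of order `3`. Then `ℤ_(p)C₃` is
semiperfect if and only if `p ≡ 2 (mod 3)`; in particular if `p ≡ 1 (mod 3)` then
`ℤ_(p)C₃` is not semiperfect. -/
theorem isSemiperfectRing_zloc_C3_iff (p : ℕ) [Fact p.Prime] (hp3 : p ≠ 3) :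
    (IsSemiperfectRing (MonoidAlgebra (ZLoc p) (Multiplicative (ZMod 3))) ↔ p % 3 = 2) ∧
    (p % 3 = 1 →
      ¬ IsSemiperfectRing (MonoidAlgebra (ZLoc p) (Multiplicative (ZMod 3)))) := by
  have hcard := natCard_residueField_zloc p
  have h3 : ¬ 3 ∣ p := fun h ↦
    hp3 ((Nat.prime_dvd_prime_iff_eq Nat.prime_three Fact.out).mp h).symm
  have key := isSemiperfectRing_zloc_C3_iff_general (hcard.symm ▸ h3)
    (sq_add_self_add_one_ne_zero_of_localization_int (Ideal.span {(p : ℤ)}))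
  rw [hcard] at key
  exact ⟨key, fun h1 ↦ by rw [key]; lia⟩
end

section
/- Let p be a prime and n a positive integer with p ∤ n, and let Cₙ be the cyclic group of order n. Then ℤ_(p)Cₙ is semiperfect if and only if for each divisor d of n the d-th cyclotomic polynomial Φ_d(z) remains irreducible as a polynomial over 𝔽_p. -/
/-!
Let `A` be a local ring with residue field `k` in which `n` is invertible. Then `X ^ n - 1` is
separable over `A`, so by the Chinese remainder theorem the group algebra of `Cₙ` over `A`, which
is `A[X] / (X ^ n - 1)`, is the product of the rings `A[X] / Φ_d` for `d ∣ n`. A finite product of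
rings is semiperfect iff every factor is. When `Φ_d` is prime over `A` the factor `A[X] / Φ_d` is a
domain, and a domain is semiperfect iff it is local, because the only idempotents it can offer as
lifts are `0` and `1`. Finally `A[X] / Φ_d` is finite over `A`, so it is local iff `k[X] / Φ_d` is;
this last ring is reduced and artinian, so it is local iff it is a field, that is, iff `Φ_d` is
irreducible over `k`. Over `A = ℤ_(p)`, Gauss's lemma gives the primality of `Φ_d`.
-/

open Polynomial

section Semiperfect

variable {R S : Type*} [Ring R] [Ring S]

/-- Idempotents lift along `f`: the second condition in the definition of a semiperfect ring,
which is the case of `R → R / J(R)`, for an arbitrary ring homomorphism. -/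
def LiftsIdempotents (f : R →+* S) : Prop :=
  ∀ y : S, IsIdempotentElem y → ∃ e : R, IsIdempotentElem e ∧ f e = y

theorem liftsIdempotents_comp_ringEquiv_iff {T : Type*} [Ring T] (f : R →+* S) (e : T ≃+* R) :
    LiftsIdempotents (f.comp (e : T →+* R)) ↔ LiftsIdempotents f := by
  refine forall₂_congr fun y _ => ⟨?_, ?_⟩
  · rintro ⟨t, ht, hty⟩
    exact ⟨e t, ht.map e, hty⟩
  · rintro ⟨r, hr, hry⟩
    exact ⟨e.symm r, hr.map e.symm, by simpa using hry⟩

theorem liftsIdempotents_ringEquiv_comp_iff {T : Type*} [Ring T] (f : R →+* S) (e : S ≃+* T) :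
    LiftsIdempotents ((e : S →+* T).comp f) ↔ LiftsIdempotents f := by
  refine ⟨fun h y hy => ?_, fun h y hy => ?_⟩
  · obtain ⟨r, hr, hry⟩ := h (e y) (hy.map e)
    exact ⟨r, hr, e.injective hry⟩
  · obtain ⟨r, hr, hry⟩ := h (e.symm y) (hy.map e.symm)
    exact ⟨r, hr, by simp [hry]⟩

theorem liftsIdempotents_piMap_iff {ι : Type*} {R S : ι → Type*} [∀ i, Ring (R i)]
    [∀ i, Ring (S i)] (f : ∀ i, R i →+* S i) :
    LiftsIdempotents (RingHom.pi fun i => (f i).comp (Pi.evalRingHom R i)) ↔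
      ∀ i, LiftsIdempotents (f i) := by
  classical
  refine ⟨fun h i y hy => ?_, fun h y hy => ?_⟩
  · have hsingle : IsIdempotentElem (Pi.single i y : ∀ j, S j) := by
      rw [IsIdempotentElem, ← Pi.single_mul, hy.eq]
    obtain ⟨e, he, hey⟩ := h _ hsingle
    exact ⟨e i, congrFun he i, by simpa using congrFun hey i⟩
  · choose e he hey using fun i => h i (y i) (congrFun hy i)
    exact ⟨e, funext he, funext hey⟩

theorem mem_ringJacobson {x : R} : x ∈ ringJacobson R ↔ x ∈ Ring.jacobson R := by
  rw [ringJacobson, ← TwoSidedIdeal.mem_asIdeal, TwoSidedIdeal.asIdeal_jacobson,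
    TwoSidedIdeal.bot_asIdeal, Ideal.jacobson_bot]

theorem isSemiperfectRing_iff_of_ker_eq_jacobson (π : R →+* S) (hπ : Function.Surjective π)
    (hker : RingHom.ker π = Ring.jacobson R) :
    IsSemiperfectRing R ↔ IsSemisimpleRing S ∧ LiftsIdempotents π := by
  have hcon : (ringJacobson R).ringCon = RingCon.ker π := by
    ext x y
    rw [TwoSidedIdeal.rel_iff, mem_ringJacobson, ← hker, RingHom.mem_ker, map_sub, sub_eq_zero,
      RingCon.ker_apply]
  let e : (ringJacobson R).ringCon.Quotient ≃+* S :=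
    RingEquiv.ofBijective ((ringJacobson R).ringCon.lift π hcon.le)
      (RingCon.lift_bijective_iff.mpr ⟨hcon, hπ⟩)
  exact and_congr e.isSemisimpleRing_iff (liftsIdempotents_ringEquiv_comp_iff _ e).symm

theorem isSemiperfectRing_iff_quotient_jacobson :
    IsSemiperfectRing R ↔ IsSemisimpleRing (R ⧸ Ring.jacobson R) ∧
      LiftsIdempotents (Ideal.Quotient.mk (Ring.jacobson R)) :=
  isSemiperfectRing_iff_of_ker_eq_jacobson _ Ideal.Quotient.mk_surjective Ideal.mk_ker

theorem isSemiperfectRing_iff_of_ringEquiv (e : R ≃+* S) :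
    IsSemiperfectRing R ↔ IsSemiperfectRing S := by
  have hker : RingHom.ker ((Ideal.Quotient.mk (Ring.jacobson S)).comp (e : R →+* S)) =
      Ring.jacobson R := by
    rw [← RingHom.comap_ker, Ideal.mk_ker, ← Ideal.jacobson_bot, ← Ideal.jacobson_bot,
      Ideal.comap_jacobson_of_surjective e.surjective,
      Ideal.comap_bot_of_injective (e : R →+* S) e.injective]
  rw [isSemiperfectRing_iff_quotient_jacobson (R := S), ← liftsIdempotents_comp_ringEquiv_iff _ e]
  exact isSemiperfectRing_iff_of_ker_eq_jacobson _
    (Ideal.Quotient.mk_surjective.comp e.surjective) hker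

theorem mem_jacobson_pi_iff {ι : Type*} {R : ι → Type*} [∀ i, Ring (R i)] {x : ∀ i, R i} :
    x ∈ Ring.jacobson (∀ i, R i) ↔ ∀ i, x i ∈ Ring.jacobson (R i) := by
  classical
  simp only [← Ideal.jacobson_bot, Ideal.mem_jacobson_iff, Ideal.mem_bot]
  refine ⟨fun h i y => ?_, fun h y => ?_⟩
  · obtain ⟨z, hz⟩ := h (Pi.single i y)
    exact ⟨z i, by simpa using congrFun hz i⟩
  · choose z hz using fun i => h i (y i)
    exact ⟨z, funext hz⟩

theorem isSemisimpleRing_pi_iff {ι : Type*} [Finite ι] {R : ι → Type*} [∀ i, Ring (R i)] :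
    IsSemisimpleRing (∀ i, R i) ↔ ∀ i, IsSemisimpleRing (R i) :=
  ⟨fun _ i => (Pi.evalRingHom R i).isSemisimpleRing_of_surjective (Function.surjective_eval i),
    fun _ => inferInstance⟩

theorem isSemiperfectRing_pi_iff {ι : Type*} [Finite ι] {R : ι → Type*} [∀ i, Ring (R i)] :
    IsSemiperfectRing (∀ i, R i) ↔ ∀ i, IsSemiperfectRing (R i) := by
  let π := RingHom.pi fun i =>
    (Ideal.Quotient.mk (Ring.jacobson (R i))).comp (Pi.evalRingHom R i)
  have hπ : Function.Surjective π := Function.Surjective.piMap fun _ => Ideal.Quotient.mk_surjective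
  have hker : RingHom.ker π = Ring.jacobson (∀ i, R i) := by
    ext x
    simp [π, mem_jacobson_pi_iff, funext_iff, Ideal.Quotient.eq_zero_iff_mem]
  rw [isSemiperfectRing_iff_of_ker_eq_jacobson π hπ hker, isSemisimpleRing_pi_iff,
    liftsIdempotents_piMap_iff, ← forall_and]
  exact forall_congr' fun i => isSemiperfectRing_iff_quotient_jacobson.symm

end Semiperfect

section Local

variable {R S : Type*} [CommRing R] [CommRing S]

theorem isField_of_forall_isIdempotentElem [Nontrivial R] [IsSemisimpleRing R]
    (h : ∀ e : R, IsIdempotentElem e → e = 0 ∨ e = 1) : IsField R := by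
  refine Ring.isField_iff_isSimpleOrder_ideal.mpr ⟨fun I => ?_⟩
  obtain ⟨e, he, rfl⟩ := IsSemisimpleRing.ideal_eq_span_idempotent I
  exact (h e he).imp (by simp [·]) (by simp [·])

theorem isSemiperfectRing_iff_isLocalRing [IsDomain R] :
    IsSemiperfectRing R ↔ IsLocalRing R := by
  refine ⟨fun hR => ?_, fun _ => ?_⟩
  · obtain ⟨_, hlift⟩ := isSemiperfectRing_iff_quotient_jacobson.mp hR
    have : Nontrivial (R ⧸ Ring.jacobson R) :=
      Ideal.Quotient.nontrivial_iff.mpr (Ring.jacobson_lt_top R).ne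
    have hfield : IsField (R ⧸ Ring.jacobson R) := by
      refine isField_of_forall_isIdempotentElem fun x hx => ?_
      obtain ⟨e, he, rfl⟩ := hlift x hx
      exact (IsIdempotentElem.iff_eq_zero_or_one.mp he).imp (by simp [·]) (by simp [·])
    have hmax := Ideal.Quotient.maximal_of_isField _ hfield
    exact .of_unique_max_ideal ⟨_, hmax, fun M hM =>
      (hmax.eq_of_le hM.ne_top (Ring.jacobson_le_of_isMaximal M)).symm⟩
  · have hker : RingHom.ker (IsLocalRing.residue R) = Ring.jacobson R := by
      rw [IsLocalRing.ker_residue, IsLocalRing.ringJacobson_eq_maximalIdeal]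
    refine (isSemiperfectRing_iff_of_ker_eq_jacobson _ IsLocalRing.residue_surjective hker).mpr
      ⟨inferInstance, fun y hy => ?_⟩
    rcases IsIdempotentElem.iff_eq_zero_or_one.mp hy with rfl | rfl
    · exact ⟨0, .zero, map_zero _⟩
    · exact ⟨1, .one, map_one _⟩

theorem isLocalHom_of_ker_le_jacobson (f : R →+* S) (hf : Function.Surjective f)
    (hker : RingHom.ker f ≤ Ring.jacobson R) : IsLocalHom f := by
  refine ⟨fun a ha => ?_⟩
  obtain ⟨s, hs⟩ := ha.exists_right_inv
  obtain ⟨b, rfl⟩ := hf s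
  have hab : a * b - 1 ∈ RingHom.ker f := by simp [RingHom.mem_ker, hs]
  have hunit : IsUnit (a * b) :=
    Ideal.isUnit_of_sub_one_mem_jacobson_bot _ (Ideal.jacobson_bot (R := R) ▸ hker hab)
  exact isUnit_of_mul_isUnit_left hunit

theorem isLocalRing_iff_of_ker_le_jacobson (f : R →+* S) (hf : Function.Surjective f)
    (hker : RingHom.ker f ≤ Ring.jacobson R) : IsLocalRing R ↔ IsLocalRing S := by
  have := isLocalHom_of_ker_le_jacobson f hf hker
  refine ⟨fun _ => ?_, fun _ => f.domain_isLocalRing⟩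
  have : Nontrivial S := by
    by_contra! _
    exact (hker.trans_lt (Ring.jacobson_lt_top R)).ne (RingHom.ker_eq_top_of_subsingleton f)
  exact .of_surjective f hf

theorem map_maximalIdeal_le_jacobson [IsLocalRing R] [Algebra R S]
    [Algebra.IsIntegral R S] :
    (IsLocalRing.maximalIdeal R).map (algebraMap R S) ≤ Ring.jacobson S := by
  rw [Ring.jacobson_eq_sInf_isMaximal]
  refine le_sInf fun M hM => Ideal.map_le_iff_le_comap.mpr ?_
  have : M.IsMaximal := hM
  exact (IsLocalRing.eq_maximalIdeal
    (Ideal.isMaximal_comap_of_isIntegral_of_isMaximal (R := R) M)).ge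

end Local

section AdjoinRoot

variable {A k : Type*} [CommRing A] [Field k]

theorem adjoinRoot_map_mk {B : Type*} [CommRing B] (φ : A →+* B) (f q : A[X]) :
    AdjoinRoot.map φ f (f.map φ) dvd_rfl (AdjoinRoot.mk f q) =
      AdjoinRoot.mk (f.map φ) (q.map φ) := by
  rw [AdjoinRoot.map, AdjoinRoot.lift_mk, ← eval₂_map, ← AdjoinRoot.algebraMap_eq, ← aeval_def,
    AdjoinRoot.aeval_eq]

theorem adjoinRoot_map_surjective {B : Type*} [CommRing B] {φ : A →+* B}
    (hφ : Function.Surjective φ) (f : A[X]) :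
    Function.Surjective (AdjoinRoot.map φ f (f.map φ) dvd_rfl) := by
  intro y
  obtain ⟨r, rfl⟩ := AdjoinRoot.mk_surjective y
  obtain ⟨q, rfl⟩ := map_surjective φ hφ r
  exact ⟨AdjoinRoot.mk f q, adjoinRoot_map_mk φ f q⟩

theorem ker_adjoinRoot_map_le {B : Type*} [CommRing B] {φ : A →+* B}
    (hφ : Function.Surjective φ) (f : A[X]) :
    RingHom.ker (AdjoinRoot.map φ f (f.map φ) dvd_rfl) ≤
      (RingHom.ker φ).map (AdjoinRoot.of f) := by
  intro x hx
  obtain ⟨q, rfl⟩ := AdjoinRoot.mk_surjective x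
  rw [RingHom.mem_ker, adjoinRoot_map_mk] at hx
  obtain ⟨h, hh⟩ := AdjoinRoot.mk_eq_zero.mp hx
  obtain ⟨g, rfl⟩ := map_surjective φ hφ h
  have hsub : q - f * g ∈ (RingHom.ker φ).map C := by
    rw [← ker_mapRingHom]
    simp [RingHom.mem_ker, hh]
  simpa [Ideal.map_map, AdjoinRoot.of] using Ideal.mem_map_of_mem (AdjoinRoot.mk f) hsub

theorem isLocalRing_adjoinRoot_iff_irreducible {g : k[X]} (hg : Squarefree g) :
    IsLocalRing (AdjoinRoot g) ↔ Irreducible g := by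
  have hg0 : g ≠ 0 := hg.ne_zero
  refine ⟨fun _ => ?_, fun hirr => ?_⟩
  · have : IsReduced (AdjoinRoot g) := (Ideal.isRadical_iff_quotient_reduced _).mp
      (isRadical_iff_span_singleton.mp hg.isRadical)
    have : Module.Finite k (AdjoinRoot g) := (AdjoinRoot.powerBasis hg0).finite
    have : IsArtinianRing (AdjoinRoot g) := .of_finite k _
    have hmax : (Ideal.span {g}).IsMaximal := Ideal.Quotient.maximal_of_isField _
      (IsArtinianRing.isField_of_isReduced_of_isLocalRing (AdjoinRoot g))
    exact ((Ideal.span_singleton_prime hg0).mp hmax.isPrime).irreducible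
  · have : Fact (Irreducible g) := ⟨hirr⟩
    infer_instance

theorem isLocalRing_adjoinRoot_iff_irreducible_map [IsLocalRing A] (φ : A →+* k)
    (hφ : Function.Surjective φ) {f : A[X]} (hf : f.Monic) (hsq : Squarefree (f.map φ)) :
    IsLocalRing (AdjoinRoot f) ↔ Irreducible (f.map φ) := by
  have : Module.Finite A (AdjoinRoot f) := hf.finite_adjoinRoot
  have hker : RingHom.ker (AdjoinRoot.map φ f (f.map φ) dvd_rfl) ≤ Ring.jacobson (AdjoinRoot f) :=
    calc
      _ ≤ (RingHom.ker φ).map (AdjoinRoot.of f) := ker_adjoinRoot_map_le hφ f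
      _ ≤ (IsLocalRing.maximalIdeal A).map (algebraMap A (AdjoinRoot f)) :=
        Ideal.map_mono (IsLocalRing.le_maximalIdeal (RingHom.ker_ne_top φ))
      _ ≤ _ := map_maximalIdeal_le_jacobson
  rw [isLocalRing_iff_of_ker_le_jacobson _ (adjoinRoot_map_surjective hφ f) hker,
    isLocalRing_adjoinRoot_iff_irreducible hsq]

theorem pairwise_isCoprime_of_separable_prod {ι : Type*} [Fintype ι] {f : ι → A[X]}
    (hsep : (∏ i, f i).Separable) : Pairwise (Function.onFun IsCoprime f) := by
  classical
  intro i j hij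
  rw [← Finset.mul_prod_erase _ _ (Finset.mem_univ i)] at hsep
  exact hsep.isCoprime.of_isCoprime_of_dvd_right
    (Finset.dvd_prod_of_mem f (Finset.mem_erase.mpr ⟨hij.symm, Finset.mem_univ j⟩))

/-- The Chinese remainder theorem for `A[X]` modulo a product of pairwise coprime polynomials. -/
noncomputable def adjoinRootProdEquivPi {ι : Type*} [Fintype ι] (f : ι → A[X])
    (hcop : Pairwise (Function.onFun IsCoprime f)) :
    AdjoinRoot (∏ i, f i) ≃+* ∀ i, AdjoinRoot (f i) :=
  (Ideal.quotEquivOfEq (Ideal.iInf_span_singleton hcop).symm).trans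
    (Ideal.quotientInfRingEquivPiQuotient (fun i => Ideal.span {f i}) fun _ _ hij =>
      (Ideal.isCoprime_span_singleton_iff _ _).mpr (hcop hij))

theorem isSemiperfectRing_adjoinRoot_prod_iff [IsLocalRing A] (φ : A →+* k)
    (hφ : Function.Surjective φ) {ι : Type*} [Fintype ι] {f : ι → A[X]}
    (hmonic : ∀ i, (f i).Monic) (hprime : ∀ i, Prime (f i)) (hsep : (∏ i, f i).Separable) :
    IsSemiperfectRing (AdjoinRoot (∏ i, f i)) ↔ ∀ i, Irreducible ((f i).map φ) := by
  rw [isSemiperfectRing_iff_of_ringEquiv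
    (adjoinRootProdEquivPi f (pairwise_isCoprime_of_separable_prod hsep)), isSemiperfectRing_pi_iff]
  refine forall_congr' fun i => ?_
  have : IsDomain (AdjoinRoot (f i)) := AdjoinRoot.isDomain_of_prime (hprime i)
  have hsep_i : (f i).Separable := hsep.of_dvd (Finset.dvd_prod_of_mem f (Finset.mem_univ i))
  rw [isSemiperfectRing_iff_isLocalRing,
    isLocalRing_adjoinRoot_iff_irreducible_map φ hφ (hmonic i) hsep_i.map.squarefree]

end AdjoinRoot

section CyclicGroupAlgebra

theorem ofAdd_one_pow_zmod (n m : ℕ) :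
    Multiplicative.ofAdd (1 : ZMod n) ^ m = Multiplicative.ofAdd (m : ZMod n) := by
  rw [← ofAdd_nsmul, nsmul_one]

variable (A : Type*) [CommRing A]

theorem adjoinRoot_root_pow_eq_one (n : ℕ) :
    AdjoinRoot.root (X ^ n - 1 : A[X]) ^ n = 1 := by
  have h : AdjoinRoot.mk (X ^ n - 1 : A[X]) (X ^ n - 1) = 0 := AdjoinRoot.mk_self
  rwa [map_sub, map_pow, map_one, AdjoinRoot.mk_X, sub_eq_zero] at h

/-- The group algebra of the cyclic group of order `n` is `A[X] / (X ^ n - 1)`, the generator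
corresponding to the class of `X`. -/
noncomputable def monoidAlgebraZModEquivAdjoinRoot (n : ℕ) [NeZero n] :
    MonoidAlgebra A (Multiplicative (ZMod n)) ≃ₐ[A] AdjoinRoot (X ^ n - 1 : A[X]) :=
  AlgEquiv.ofAlgHom
    (MonoidAlgebra.lift A _ _ (AddChar.zmodChar n (adjoinRoot_root_pow_eq_one A n)).toMonoidHom)
    (AdjoinRoot.liftAlgHom _ (Algebra.ofId A _)
      (MonoidAlgebra.single (Multiplicative.ofAdd (1 : ZMod n)) 1)
      (by simp [ofAdd_one_pow_zmod, MonoidAlgebra.one_def]))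
    (by
      ext
      simpa using AddChar.zmodChar_apply' (adjoinRoot_root_pow_eq_one A n) 1)
    (by
      ext g
      simp [AddChar.zmodChar_apply, ofAdd_one_pow_zmod])

variable {A}

theorem separable_X_pow_sub_one_of_isUnit {n : ℕ} (hn : IsUnit (n : A)) :
    (X ^ n - 1 : A[X]).Separable := by
  simpa using separable_X_pow_sub_C_unit (1 : Aˣ) hn

variable {k : Type*} [IsLocalRing A] [Field k]

theorem isSemiperfectRing_adjoinRoot_X_pow_sub_one_iff (φ : A →+* k) (hφ : Function.Surjective φ)
    {n : ℕ} (hn : IsUnit (n : A)) (hprime : ∀ d, d ∣ n → Prime (cyclotomic d A)) :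
    IsSemiperfectRing (AdjoinRoot (X ^ n - 1 : A[X])) ↔
      ∀ d, d ∣ n → Irreducible (cyclotomic d k) := by
  have hn0 : n ≠ 0 := by rintro rfl; simp at hn
  have hprod : ∏ d : n.divisors, cyclotomic (d : ℕ) A = X ^ n - 1 := by
    rw [Finset.prod_coe_sort n.divisors (cyclotomic · A),
      prod_cyclotomic_eq_X_pow_sub_one (Nat.pos_of_ne_zero hn0)]
  have hsep : (∏ d : n.divisors, cyclotomic (d : ℕ) A).Separable :=
    hprod ▸ separable_X_pow_sub_one_of_isUnit hn
  rw [← hprod, isSemiperfectRing_adjoinRoot_prod_iff φ hφ (fun _ => cyclotomic.monic _ A)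
    (fun d : n.divisors => hprime d (Nat.dvd_of_mem_divisors d.2)) hsep]
  simp [hn0]

theorem isSemiperfectRing_zloc_cyclic_iff_cyclotomic_irreducible_general {G : Type*} [Group G]
    [IsCyclic G] {n : ℕ} (hcard : Nat.card G = n) (hn : IsUnit (n : A))
    (hprime : ∀ d, d ∣ n → Prime (cyclotomic d A)) (φ : A →+* k) (hφ : Function.Surjective φ) :
    IsSemiperfectRing (MonoidAlgebra A G) ↔ ∀ d, d ∣ n → Irreducible (cyclotomic d k) := by
  subst hcard
  have : NeZero (Nat.card G) := ⟨fun h => by simp [h] at hn⟩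
  let e : MonoidAlgebra A G ≃ₐ[A] AdjoinRoot (X ^ Nat.card G - 1 : A[X]) :=
    (MonoidAlgebra.domCongr A A (zmodCyclicMulEquiv ‹_›).symm).trans
      (monoidAlgebraZModEquivAdjoinRoot A (Nat.card G))
  rw [isSemiperfectRing_iff_of_ringEquiv e.toRingEquiv,
    isSemiperfectRing_adjoinRoot_X_pow_sub_one_iff φ hφ hn hprime]

end CyclicGroupAlgebra

theorem prime_cyclotomic_of_ringHom_rat {A : Type*} [CommRing A] [IsDomain A]
    [UniqueFactorizationMonoid A] (θ : A →+* ℚ) {d : ℕ} (hd : 0 < d) : Prime (cyclotomic d A) := by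
  refine ((cyclotomic.monic d A).irreducible_of_irreducible_map θ _ ?_).prime
  rw [map_cyclotomic]
  exact cyclotomic.irreducible_rat hd

section ZLoc

variable {p : ℕ} [Fact p.Prime]

theorem isUnit_natCast_zloc {n : ℕ} (hpn : ¬ p ∣ n) : IsUnit (n : ZLoc p) := by
  have hmem : (n : ℤ) ∈ (Ideal.span {(p : ℤ)}).primeCompl := by
    simpa [Ideal.primeCompl, Ideal.mem_span_singleton, Int.natCast_dvd_natCast] using hpn
  simpa using IsLocalization.map_units (ZLoc p) ⟨_, hmem⟩

theorem nonempty_zloc_ringHom_of_charP (F : Type*) [Field F] (q : ℕ) [CharP F q] (hpq : p ∣ q) :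
    Nonempty (ZLoc p →+* F) := by
  refine ⟨IsLocalization.lift (M := (Ideal.span {(p : ℤ)}).primeCompl) (g := Int.castRingHom F)
    fun z => isUnit_iff_ne_zero.mpr fun hz => z.2 ?_⟩
  have hqz : (q : ℤ) ∣ z := (CharP.intCast_eq_zero_iff F q z).mp (by simpa using hz)
  exact Ideal.mem_span_singleton.mpr ((Int.natCast_dvd_natCast.mpr hpq).trans hqz)

theorem prime_cyclotomic_zloc {d : ℕ} (hd : 0 < d) : Prime (cyclotomic d (ZLoc p)) :=
  let ⟨θ⟩ := nonempty_zloc_ringHom_of_charP (p := p) ℚ 0 (dvd_zero p)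
  prime_cyclotomic_of_ringHom_rat θ hd

end ZLoc

/-- Let `p` be a prime and `n > 0` with `p ∤ n`, and let `Cₙ` be the cyclic group of order
`n`. Then `ℤ_(p)Cₙ` is semiperfect if and only if for each divisor `d` of `n` the `d`-th
cyclotomic polynomial remains irreducible modulo `p`. -/
theorem isSemiperfectRing_zloc_cyclic_iff_cyclotomic_irreducible
    (p n : ℕ) [Fact p.Prime] (hn : 0 < n) (hpn : ¬ p ∣ n) :
    IsSemiperfectRing (MonoidAlgebra (ZLoc p) (Multiplicative (ZMod n))) ↔
      ∀ d : ℕ, d ∣ n →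
        Irreducible ((Polynomial.cyclotomic d ℤ).map (Int.castRingHom (ZMod p))) := by
  obtain ⟨φ⟩ := nonempty_zloc_ringHom_of_charP (p := p) (ZMod p) p dvd_rfl
  simpa only [map_cyclotomic] using
    isSemiperfectRing_zloc_cyclic_iff_cyclotomic_irreducible_general
      (G := Multiplicative (ZMod n)) (Nat.card_zmod n) (isUnit_natCast_zloc hpn)
      (fun d hd => prime_cyclotomic_zloc (Nat.pos_of_dvd_of_pos hd hn))
      φ (ZMod.ringHom_surjective φ)
end
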